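/- arXiv:1005.5185 — 3 statements merged into one kernel-verified Lean document; each statement's English description precedes it below -/
import Mathlib

section
/- Let x ∈ B be a nonzero monomial of degree d' (i.e., x = π_B(x̂) where x̂ is the unique pure tensor outside ⟨R'⟩ with image x) and let w ∈ l.ann_B(x) be homogeneous of degree d. Write the canonical lift of w as ŵ = Σ_{t=1}^k α_t w_t, where the w_t are distinct pure tensors of degree d lying outside ⟨R'⟩ and α_t ∈ K ∖ {0}. Then π_B(w_t x̂) = 0 in B for every t with 1 ≤ t ≤ k. -/
noncomputable section

inductive Gen (n : ℕ) : Type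
  | a : Fin (n+1) → Gen n
  | b : Fin (n+1) → Gen n
  | c : Fin (n+1) → Gen n

variable (K : Type) [Field K] (n : ℕ)

/-- The tensor algebra `T(V)` on the span of the generators, i.e. the free algebra. -/
abbrev FA := FreeAlgebra K (Gen n)

/-- `a_i`, with the convention that out-of-range indices give `0`. -/
def ga (i : ℤ) : FA K n :=
  if h : 0 ≤ i ∧ i ≤ (n : ℤ) then FreeAlgebra.ι K (Gen.a ⟨i.toNat, by omega⟩) else 0

def gb (i : ℤ) : FA K n :=
  if h : 0 ≤ i ∧ i ≤ (n : ℤ) then FreeAlgebra.ι K (Gen.b ⟨i.toNat, by omega⟩) else 0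

def gc (i : ℤ) : FA K n :=
  if h : 0 ≤ i ∧ i ≤ (n : ℤ) then FreeAlgebra.ι K (Gen.c ⟨i.toNat, by omega⟩) else 0

/-- The set `R` of defining relations. -/
def rels : Set (FA K n) :=
  { x | x = ga K n n * gb K n n * gc K n n ∨ x = gc K n 0 * ga K n 0 ∨
      ∃ i : ℕ, i < n ∧
        (x = ga K n i * gb K n i * gc K n i + gc K n (i+1) * ga K n (i+1) * gb K n (i+1) ∨
         x = gb K n (i+1) * gc K n (i+1) * ga K n (i+1) ∨
         x = gc K n i * gc K n (i+1) ∨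
         x = gb K n (i+1) * ga K n i) }

/-- The relation whose ring-quotient is `B = T(V)/⟨R⟩`. -/
def BRel (x y : FA K n) : Prop := x ∈ rels K n ∧ y = 0

/-- The algebra `B = T(V)/⟨R⟩`. -/
abbrev B := RingQuot (BRel K n)

/-- The quotient map `π_B : T(V) → B`. -/
def πB : FA K n →ₐ[K] B K n := RingQuot.mkAlgHom K (BRel K n)

/-- The image of `a_i` in `B` (zero for out-of-range indices). -/
def aB (i : ℤ) : B K n := πB K n (ga K n i)
def bB (i : ℤ) : B K n := πB K n (gb K n i)
def cB (i : ℤ) : B K n := πB K n (gc K n i)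

/-- The left annihilator of `x`, as a left ideal of `B`. -/
def lann (x : B K n) : Ideal (B K n) where
  carrier := {w | w * x = 0}
  add_mem' := by
    intro a b ha hb
    simp only [Set.mem_setOf_eq, add_mul] at *
    rw [ha, hb, add_zero]
  zero_mem' := by simp
  smul_mem' := by
    intro c w hw
    simp only [Set.mem_setOf_eq, smul_eq_mul, mul_assoc] at *
    rw [hw, mul_zero]

end

/-- The pure tensor in `T(V)` corresponding to a word in the generators. -/
def word (K : Type) [Field K] (n : ℕ) (l : List (Gen n)) : FA K n :=
  (l.map (FreeAlgebra.ι K)).prod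

/-- The set `R'` of forbidden subwords, as words in the generators. -/
def Rwords' (n : ℕ) : Set (List (Gen n)) :=
  { l | l = [Gen.a (Fin.last n), Gen.b (Fin.last n), Gen.c (Fin.last n)] ∨
        l = [Gen.c 0, Gen.a 0] ∨
        ∃ i : Fin n,
          l = [Gen.c i.succ, Gen.a i.succ, Gen.b i.succ] ∨
          l = [Gen.b i.succ, Gen.c i.succ, Gen.a i.succ] ∨
          l = [Gen.c i.castSucc, Gen.c i.succ] ∨
          l = [Gen.b i.succ, Gen.a i.castSucc] }

/-- A word is in canonical form (is "good") if it contains no factor from `R'`. -/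
def Good (n : ℕ) (l : List (Gen n)) : Prop := ¬ ∃ w ∈ Rwords' n, w <:+: l

/-!
Rescaling `a_i` by `(-1) ^ i` turns the binomial relation into
`a_i b_i c_i = c_{i+1} a_{i+1} b_{i+1}`, so up to sign every product of a good word `l` with a
letter `g` on the right is zero or again a good word: either `l g` itself, or `u a_i b_i c_i` when
`l = u c_{i+1} a_{i+1}` and `g = b_{i+1}`. For a fixed `g` the last letter of the result tells
these two cases apart, so `l` can be recovered from it. Hence right multiplication by any word `x`
is injective on the good words that it does not kill. The rule also defines an action of `B`, which
makes good words linearly independent, so no cancellation can occur in `∑ α_t w_t x`.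
-/

section Suffixes

variable {α : Type*} {l : List α} {x y z g : α}

theorem singleton_suffix_concat_iff : [x] <:+ l ++ [g] ↔ x = g := by
  simp [← List.reverse_prefix]

theorem pair_suffix_concat_iff : [x, y] <:+ l ++ [g] ↔ [x] <:+ l ∧ y = g := by
  simp [← List.reverse_prefix, List.cons_prefix_cons, and_comm]

theorem triple_suffix_concat_iff : [x, y, z] <:+ l ++ [g] ↔ [x, y] <:+ l ∧ z = g := by
  simp [← List.reverse_prefix, List.cons_prefix_cons, and_comm]

end Suffixes

section GoodWords

open Gen

variable {n : ℕ} {l u v : List (Gen n)} {g : Gen n}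

theorem Good.of_append_left (h : Good n (u ++ v)) : Good n u :=
  fun ⟨r, hr, hru⟩ => h ⟨r, hr, hru.trans (List.prefix_append u v).isInfix⟩

theorem good_concat_iff :
    Good n (l ++ [g]) ↔ Good n l ∧ ∀ r ∈ Rwords' n, ¬ r <:+ l ++ [g] := by
  simp only [Good, List.infix_concat_iff]
  grind

theorem forall_mem_Rwords'_iff {p : List (Gen n) → Prop} :
    (∀ r ∈ Rwords' n, p r) ↔
      p [a (Fin.last n), b (Fin.last n), c (Fin.last n)] ∧ p [c 0, a 0] ∧
      ∀ i : Fin n, p [c i.succ, a i.succ, b i.succ] ∧ p [b i.succ, c i.succ, a i.succ] ∧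
        p [c i.castSucc, c i.succ] ∧ p [b i.succ, a i.castSucc] := by
  simp only [Rwords', Set.mem_ofPred_eq]
  grind

theorem good_concat_a_iff {j : Fin (n + 1)} :
    Good n (l ++ [a j]) ↔ Good n l ∧ (j = 0 → ¬ [c 0] <:+ l) ∧
      ∀ i : Fin n, (j = i.succ → ¬ [b j, c j] <:+ l) ∧ (j = i.castSucc → ¬ [b i.succ] <:+ l) := by
  simp only [good_concat_iff, forall_mem_Rwords'_iff, triple_suffix_concat_iff,
    pair_suffix_concat_iff]
  grind

theorem good_concat_b_iff {j : Fin (n + 1)} :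
    Good n (l ++ [b j]) ↔ Good n l ∧ ∀ i : Fin n, j = i.succ → ¬ [c j, a j] <:+ l := by
  simp only [good_concat_iff, forall_mem_Rwords'_iff, triple_suffix_concat_iff,
    pair_suffix_concat_iff]
  grind

theorem good_concat_c_iff {j : Fin (n + 1)} :
    Good n (l ++ [c j]) ↔ Good n l ∧ (j = Fin.last n → ¬ [a j, b j] <:+ l) ∧
      ∀ i : Fin n, j = i.succ → ¬ [c i.castSucc] <:+ l := by
  simp only [good_concat_iff, forall_mem_Rwords'_iff, triple_suffix_concat_iff,
    pair_suffix_concat_iff]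
  grind

theorem good_append_ca_iff {i : Fin n} :
    Good n (l ++ [c i.succ, a i.succ]) ↔
      Good n l ∧ ¬ [c i.castSucc] <:+ l ∧ ¬ [b i.succ] <:+ l := by
  have b_suffix_of_ab_suffix : [a i.succ, b i.succ] <:+ l → [b i.succ] <:+ l :=
    (List.suffix_cons _ _).trans
  rw [show l ++ [c i.succ, a i.succ] = l ++ [c i.succ] ++ [a i.succ] by simp]
  simp only [good_concat_a_iff, good_concat_c_iff, pair_suffix_concat_iff,
    singleton_suffix_concat_iff]
  grind

theorem good_append_abc_iff {i : Fin n} :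
    Good n (l ++ [a i.castSucc, b i.castSucc, c i.castSucc]) ↔
      Good n l ∧ ¬ [c i.castSucc] <:+ l ∧ ¬ [b i.succ] <:+ l := by
  have c_suffix_of_bc_suffix : [b i.castSucc, c i.castSucc] <:+ l → [c i.castSucc] <:+ l :=
    (List.suffix_cons _ _).trans
  have zero_or_succ := Fin.eq_zero_or_eq_succ i.castSucc
  rw [show l ++ [a i.castSucc, b i.castSucc, c i.castSucc] =
    l ++ [a i.castSucc] ++ [b i.castSucc] ++ [c i.castSucc] by simp]
  simp only [good_concat_a_iff, good_concat_b_iff, good_concat_c_iff, pair_suffix_concat_iff,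
    singleton_suffix_concat_iff]
  grind

theorem good_append_ca_iff_good_append_abc {i : Fin n} :
    Good n (l ++ [c i.succ, a i.succ]) ↔
      Good n (l ++ [a i.castSucc, b i.castSucc, c i.castSucc]) :=
  good_append_ca_iff.trans good_append_abc_iff.symm

end GoodWords

section RightMultiplication

open Gen

variable {n : ℕ} {l l' m m' w : List (Gen n)} {g : Gen n}

/-- The good word `m` is, up to sign, the product of the good word `l` with the letter `g` in `B`:
either `l g` is good, or its only forbidden factor is a final `c_{i+1} a_{i+1} b_{i+1}`, which the
binomial relation replaces by `a_i b_i c_i`. -/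
def IsNormalMul (l : List (Gen n)) (g : Gen n) (m : List (Gen n)) : Prop :=
  (Good n (l ++ [g]) ∧ m = l ++ [g]) ∨
  ∃ (u : List (Gen n)) (i : Fin n), Good n l ∧ l = u ++ [c i.succ, a i.succ] ∧ g = b i.succ ∧
    m = u ++ [a i.castSucc, b i.castSucc, c i.castSucc]

theorem IsNormalMul.good (h : IsNormalMul l g m) : Good n m := by
  rcases h with ⟨h, rfl⟩ | ⟨u, i, hl, rfl, -, rfl⟩
  · exact h
  · exact good_append_ca_iff_good_append_abc.1 hl

theorem not_good_append_ca_concat_b {i : Fin n} {u : List (Gen n)} :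
    ¬ Good n (u ++ [c i.succ, a i.succ] ++ [b i.succ]) :=
  fun h => (good_concat_b_iff.1 h).2 i rfl (List.suffix_append _ _)

theorem IsNormalMul.right_unique (h : IsNormalMul l g m) (h' : IsNormalMul l g m') : m = m' := by
  rcases h with ⟨hg, rfl⟩ | ⟨u, i, -, rfl, rfl, rfl⟩ <;>
    rcases h' with ⟨hg', rfl⟩ | ⟨u', i', -, hl, hb, rfl⟩
  · rfl
  · subst hl hb
    exact absurd hg not_good_append_ca_concat_b
  · exact absurd hg' not_good_append_ca_concat_b
  · simp_all

theorem IsNormalMul.left_unique (h : IsNormalMul l g m) (h' : IsNormalMul l' g m) : l = l' := by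
  have concat_ne {v u : List (Gen n)} {j k : Fin (n + 1)} {x y : Gen n} :
      v ++ [b j] ≠ u ++ [x, y, c k] := by
    intro e
    simpa using congrArg List.getLast? e
  rcases h with ⟨-, rfl⟩ | ⟨u, i, -, rfl, rfl, rfl⟩ <;>
    rcases h' with ⟨-, e⟩ | ⟨u', i', -, rfl, hb, e⟩
  · exact List.append_cancel_right e
  · subst hb
    exact absurd e concat_ne
  · exact absurd e.symm concat_ne
  · simp_all

open Classical in
/-- Right multiplication of good words by a letter in `B`, up to sign, with `none` standing for
zero. A word that is not good is sent to `none`. -/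
noncomputable def mulLetter (l : List (Gen n)) (g : Gen n) : Option (List (Gen n)) :=
  if h : ∃ m, IsNormalMul l g m then some h.choose else none

theorem mulLetter_eq_some_iff : mulLetter l g = some m ↔ IsNormalMul l g m := by
  unfold mulLetter
  split_ifs with h
  · rw [Option.some_inj]
    exact ⟨fun e => e ▸ h.choose_spec, h.choose_spec.right_unique⟩
  · simpa using fun hm => h ⟨m, hm⟩

theorem mulLetter_a_eq_some_iff {j : Fin (n + 1)} :
    mulLetter l (a j) = some m ↔ Good n (l ++ [a j]) ∧ m = l ++ [a j] := by
  simp [mulLetter_eq_some_iff, IsNormalMul]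

theorem mulLetter_b_eq_some_iff {j : Fin (n + 1)} :
    mulLetter l (b j) = some m ↔ (Good n (l ++ [b j]) ∧ m = l ++ [b j]) ∨
      ∃ (u : List (Gen n)) (i : Fin n), Good n l ∧ l = u ++ [c i.succ, a i.succ] ∧ j = i.succ ∧
        m = u ++ [a i.castSucc, b i.castSucc, c i.castSucc] := by
  simp [mulLetter_eq_some_iff, IsNormalMul]

theorem mulLetter_c_eq_some_iff {j : Fin (n + 1)} :
    mulLetter l (c j) = some m ↔ Good n (l ++ [c j]) ∧ m = l ++ [c j] := by
  simp [mulLetter_eq_some_iff, IsNormalMul]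

/-- Right multiplication of a good word `l` by a word `w`, one letter at a time, up to sign;
`mulWord [] w` is the normal form of `w`. -/
noncomputable def mulWord (l w : List (Gen n)) : Option (List (Gen n)) :=
  w.foldlM mulLetter l

theorem mulWord_nil_right : mulWord l [] = some l := rfl

theorem mulWord_cons : mulWord l (g :: w) = (mulLetter l g).bind (mulWord · w) := by
  simp [mulWord]

theorem mulWord_append {v : List (Gen n)} :
    mulWord l (v ++ w) = (mulWord l v).bind (mulWord · w) := by
  simp [mulWord]

theorem Good.mulWord_nil_left (h : Good n w) : mulWord [] w = some w := by
  induction w using List.reverseRecOn with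
  | nil => rfl
  | append_singleton w g ih =>
    have hg : mulLetter w g = some (w ++ [g]) := mulLetter_eq_some_iff.2 (.inl ⟨h, rfl⟩)
    simp [mulWord_append, mulWord_cons, mulWord_nil_right, ih h.of_append_left, hg]

theorem mulWord_left_injective (h : mulWord l w = some m) (h' : mulWord l' w = some m) :
    l = l' := by
  induction w generalizing l l' with
  | nil => simp_all [mulWord_nil_right]
  | cons g w ih =>
    simp only [mulWord_cons, Option.bind_eq_some_iff, mulLetter_eq_some_iff] at h h'
    obtain ⟨k, hk, hkm⟩ := h
    obtain ⟨k', hk', hkm'⟩ := h'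
    obtain rfl := ih hkm hkm'
    exact hk.left_unique hk'

end RightMultiplication

section Relations

open Gen

variable {n : ℕ} {l m r : List (Gen n)}

/-- The words of `R'` that belong to `R` themselves, i.e. all but `c_{i+1} a_{i+1} b_{i+1}`. -/
def zeroWords (n : ℕ) : Set (List (Gen n)) :=
  { r | r = [a (Fin.last n), b (Fin.last n), c (Fin.last n)] ∨ r = [c 0, a 0] ∨
      ∃ i : Fin n, r = [b i.succ, c i.succ, a i.succ] ∨ r = [c i.castSucc, c i.succ] ∨
        r = [b i.succ, a i.castSucc] }

theorem exists_mem_zeroWords_iff {p : List (Gen n) → Prop} :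
    (∃ r ∈ zeroWords n, p r) ↔
      p [a (Fin.last n), b (Fin.last n), c (Fin.last n)] ∨ p [c 0, a 0] ∨
      ∃ i : Fin n, p [b i.succ, c i.succ, a i.succ] ∨ p [c i.castSucc, c i.succ] ∨
        p [b i.succ, a i.castSucc] := by
  simp only [zeroWords, Set.mem_ofPred_eq]
  grind

theorem mem_Rwords'_iff :
    r ∈ Rwords' n ↔ r ∈ zeroWords n ∨ ∃ i : Fin n, r = [c i.succ, a i.succ, b i.succ] := by
  simp only [Rwords', zeroWords, Set.mem_ofPred_eq]
  grind

theorem mulWord_eq_none_of_mem_zeroWords (hr : r ∈ zeroWords n) : mulWord l r = none := by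
  rw [Option.eq_none_iff_forall_ne_some]
  intro m hm
  rcases hr with rfl | rfl | ⟨i, rfl | rfl | rfl⟩ <;>
    simp only [mulWord_cons, mulWord_nil_right, Option.bind_eq_some_iff, mulLetter_a_eq_some_iff,
      mulLetter_b_eq_some_iff, mulLetter_c_eq_some_iff] at hm
  · obtain ⟨_, ⟨-, rfl⟩, _, ⟨-, rfl⟩ | ⟨u, i, -, -, hi, rfl⟩, _, ⟨h, rfl⟩, -⟩ := hm
    · exact (good_concat_c_iff.1 h).2.1 rfl ⟨l, by simp⟩
    · exact (good_concat_c_iff.1 h).2.2 i hi ⟨u ++ [a i.castSucc, b i.castSucc], by simp⟩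
  · obtain ⟨_, ⟨-, rfl⟩, _, ⟨h, rfl⟩, -⟩ := hm
    exact (good_concat_a_iff.1 h).2.1 rfl (List.suffix_append _ _)
  · obtain ⟨_, ⟨-, rfl⟩ | ⟨u, j, -, -, hj, rfl⟩, _, ⟨hc, rfl⟩, _, ⟨ha, rfl⟩, -⟩ := hm
    · exact ((good_concat_a_iff.1 ha).2.2 i).1 rfl ⟨l, by simp⟩
    · exact (good_concat_c_iff.1 hc).2.2 j hj ⟨u ++ [a j.castSucc, b j.castSucc], by simp⟩
  · obtain ⟨_, ⟨-, rfl⟩, _, ⟨h, rfl⟩, -⟩ := hm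
    exact (good_concat_c_iff.1 h).2.2 i rfl (List.suffix_append _ _)
  · obtain ⟨_, ⟨-, rfl⟩ | ⟨u, j, -, -, hj, rfl⟩, _, ⟨h, rfl⟩, -⟩ := hm
    · exact ((good_concat_a_iff.1 h).2.2 i).2 rfl (List.suffix_append _ _)
    · obtain rfl := Fin.succ_injective _ hj
      rcases Fin.eq_zero_or_eq_succ i.castSucc with hi | ⟨k, hi⟩
      · exact (good_concat_a_iff.1 h).2.1 hi ⟨u ++ [a i.castSucc, b i.castSucc], by simp [hi]⟩
      · exact ((good_concat_a_iff.1 h).2.2 k).1 hi ⟨u ++ [a i.castSucc], by simp⟩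

theorem mulWord_abc_eq_some_iff {i : Fin n} :
    mulWord l [a i.castSucc, b i.castSucc, c i.castSucc] = some m ↔
      Good n (l ++ [a i.castSucc, b i.castSucc, c i.castSucc]) ∧
        m = l ++ [a i.castSucc, b i.castSucc, c i.castSucc] := by
  simp only [mulWord_cons, mulWord_nil_right, Option.bind_eq_some_iff, mulLetter_a_eq_some_iff,
    mulLetter_b_eq_some_iff, mulLetter_c_eq_some_iff]
  constructor
  · rintro ⟨_, ⟨-, rfl⟩, _, ⟨-, rfl⟩ | ⟨u, j, -, -, hj, rfl⟩, _, ⟨h, rfl⟩, hm⟩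
    · simp_all
    · exact absurd ⟨u ++ [a j.castSucc, b j.castSucc], by simp⟩ ((good_concat_c_iff.1 h).2.2 j hj)
  · rintro ⟨h, rfl⟩
    have habc : Good n (l ++ [a i.castSucc] ++ [b i.castSucc] ++ [c i.castSucc]) := by simpa using h
    have hab := habc.of_append_left
    exact ⟨_, ⟨hab.of_append_left, rfl⟩, _, .inl ⟨hab, rfl⟩, _, ⟨habc, rfl⟩, by simp⟩

theorem mulWord_cab_eq_some_iff {i : Fin n} :
    mulWord l [c i.succ, a i.succ, b i.succ] = some m ↔
      Good n (l ++ [c i.succ, a i.succ]) ∧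
        m = l ++ [a i.castSucc, b i.castSucc, c i.castSucc] := by
  simp only [mulWord_cons, mulWord_nil_right, Option.bind_eq_some_iff, mulLetter_a_eq_some_iff,
    mulLetter_b_eq_some_iff, mulLetter_c_eq_some_iff]
  constructor
  · rintro ⟨_, ⟨-, rfl⟩, _, ⟨hca, rfl⟩, _, ⟨h, rfl⟩ | ⟨u, j, -, hu, hj, rfl⟩, hm⟩
    · exact absurd (by simpa using h) (not_good_append_ca_concat_b (u := l) (i := i))
    · simp_all
  · rintro ⟨h, rfl⟩
    have hca : Good n (l ++ [c i.succ] ++ [a i.succ]) := by simpa using h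
    exact ⟨_, ⟨hca.of_append_left, rfl⟩, _, ⟨hca, rfl⟩, _,
      .inr ⟨l, i, hca, by simp, rfl, rfl⟩, rfl⟩

theorem mulWord_cab_eq_mulWord_abc {i : Fin n} :
    mulWord l [c i.succ, a i.succ, b i.succ] =
      mulWord l [a i.castSucc, b i.castSucc, c i.castSucc] := by
  ext m
  rw [mulWord_cab_eq_some_iff, mulWord_abc_eq_some_iff, good_append_ca_iff_good_append_abc]

end Relations

section Algebra

open Gen

variable {K : Type} [Field K] {n : ℕ} {l m r w : List (Gen n)} {g : Gen n}

theorem ga_natCast (j : Fin (n + 1)) : ga K n (j : ℕ) = FreeAlgebra.ι K (a j) := by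
  simp [ga, Nat.le_of_lt_succ j.2]

theorem gb_natCast (j : Fin (n + 1)) : gb K n (j : ℕ) = FreeAlgebra.ι K (b j) := by
  simp [gb, Nat.le_of_lt_succ j.2]

theorem gc_natCast (j : Fin (n + 1)) : gc K n (j : ℕ) = FreeAlgebra.ι K (c j) := by
  simp [gc, Nat.le_of_lt_succ j.2]

theorem word_append (u v : List (Gen n)) : word K n (u ++ v) = word K n u * word K n v := by
  simp [word]

theorem mem_rels_iff {x : FA K n} :
    x ∈ rels K n ↔ (∃ r ∈ zeroWords n, x = word K n r) ∨
      ∃ i : Fin n, x = word K n [a i.castSucc, b i.castSucc, c i.castSucc] +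
        word K n [c i.succ, a i.succ, b i.succ] := by
  have exists_lt_iff (p : ℕ → Prop) : (∃ i, i < n ∧ p i) ↔ ∃ i : Fin n, p i := by
    simp [Fin.exists_iff]
  have ga_castSucc (i : Fin n) : ga K n (i : ℕ) = _ := ga_natCast i.castSucc
  have gb_castSucc (i : Fin n) : gb K n (i : ℕ) = _ := gb_natCast i.castSucc
  have gc_castSucc (i : Fin n) : gc K n (i : ℕ) = _ := gc_natCast i.castSucc
  have ga_succ (i : Fin n) : ga K n ((i : ℕ) + 1) = _ := ga_natCast i.succ
  have gb_succ (i : Fin n) : gb K n ((i : ℕ) + 1) = _ := gb_natCast i.succ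
  have gc_succ (i : Fin n) : gc K n ((i : ℕ) + 1) = _ := gc_natCast i.succ
  have ga_last : ga K n n = _ := ga_natCast (Fin.last n)
  have gb_last : gb K n n = _ := gb_natCast (Fin.last n)
  have gc_last : gc K n n = _ := gc_natCast (Fin.last n)
  have ga_zero : ga K n 0 = _ := ga_natCast 0
  have gc_zero : gc K n 0 = _ := gc_natCast 0
  simp only [rels, Set.mem_ofPred_eq, exists_lt_iff, ga_castSucc, gb_castSucc, gc_castSucc,
    ga_succ, gb_succ, gc_succ, ga_last, gb_last, gc_last, ga_zero, gc_zero]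
  simp only [exists_mem_zeroWords_iff, word, List.map_cons, List.map_nil, List.prod_cons,
    List.prod_nil, mul_one, mul_assoc, exists_or]
  tauto

/-- The sign of the rescaling `a_i ↦ (-1) ^ i a_i`, which turns the relation
`a_i b_i c_i + c_{i+1} a_{i+1} b_{i+1}` into a difference of two words. -/
def letterSign (K : Type) [Field K] : Gen n → K
  | a i => (-1) ^ (i : ℕ)
  | _ => 1

/-- The sign of a word under the rescaling `a_i ↦ (-1) ^ i a_i`. -/
def wordSign (K : Type) [Field K] (w : List (Gen n)) : K :=
  (w.map (letterSign K)).prod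

theorem wordSign_ne_zero : wordSign K w ≠ 0 := by
  refine List.prod_ne_zero fun h => ?_
  obtain ⟨g, -, hg⟩ := List.mem_map.1 h
  cases g <;> simp [letterSign] at hg

/-- A letter `g` acting on functions of words by `f ↦ (l ↦ f (l g))`, with the sign of `g`. On
functions, right multiplication of words becomes a left action. -/
noncomputable def letterAction (K : Type) [Field K] (g : Gen n) :
    Module.End K (List (Gen n) → K) where
  toFun f l := letterSign K g * (mulLetter l g).elim 0 f
  map_add' f f' := by
    ext l
    cases h : mulLetter l g <;> simp [h, mul_add]
  map_smul' x f := by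
    ext l
    cases h : mulLetter l g <;> simp [h, mul_left_comm]

/-- The action of `T(V)` on functions of words extending `letterAction`. -/
noncomputable def tensorAction (K : Type) [Field K] (n : ℕ) :
    FA K n →ₐ[K] Module.End K (List (Gen n) → K) :=
  FreeAlgebra.lift K (letterAction K)

theorem tensorAction_word_apply (w : List (Gen n)) (f : List (Gen n) → K) (l : List (Gen n)) :
    tensorAction K n (word K n w) f l = wordSign K w * (mulWord l w).elim 0 f := by
  induction w generalizing l with
  | nil => simp [word, wordSign, mulWord_nil_right]
  | cons g w ih =>
    have hcons : word K n (g :: w) = FreeAlgebra.ι K g * word K n w := by simp [word]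
    have hι : tensorAction K n (FreeAlgebra.ι K g) = letterAction K g := by simp [tensorAction]
    rw [hcons, map_mul, hι, Module.End.mul_apply, mulWord_cons]
    cases h : mulLetter l g <;> simp [letterAction, h, ih, wordSign, mul_assoc]

theorem tensorAction_eq_zero_of_mem_rels {x : FA K n} (hx : x ∈ rels K n) :
    tensorAction K n x = 0 := by
  ext f l
  rcases mem_rels_iff.1 hx with ⟨r, hr, rfl⟩ | ⟨i, rfl⟩
  · simp [tensorAction_word_apply, mulWord_eq_none_of_mem_zeroWords hr]
  · simp [tensorAction_word_apply, mulWord_cab_eq_mulWord_abc, wordSign, letterSign, pow_succ]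

/-- The action of `B` on functions of words induced by `tensorAction`. -/
noncomputable def quotientAction (K : Type) [Field K] (n : ℕ) :
    B K n →ₐ[K] Module.End K (List (Gen n) → K) :=
  RingQuot.liftAlgHom K ⟨tensorAction K n, by
    rintro x y ⟨hx, rfl⟩
    rw [tensorAction_eq_zero_of_mem_rels hx, map_zero]⟩

theorem quotientAction_πB (x : FA K n) : quotientAction K n (πB K n x) = tensorAction K n x := by
  simp [quotientAction, πB]

theorem coeff_eq_zero_of_sum_πB_word_eq_zero {ι : Type*} [Fintype ι] {v : ι → List (Gen n)}
    {α : ι → K} (hsum : ∑ s, α s • πB K n (word K n (v s)) = 0) {t : ι}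
    (hm : mulWord [] (v t) = some m) (huniq : ∀ s, mulWord [] (v s) = some m → s = t) :
    α t = 0 := by
  classical
  have hcoeff : ∑ s, α s * (wordSign K (v s) * (mulWord [] (v s)).elim 0 (Pi.single m 1)) = 0 := by
    have h := congrArg (fun y => quotientAction K n y (Pi.single m 1) []) hsum
    simpa [quotientAction_πB, tensorAction_word_apply] using h
  have hother (s : ι) (hs : s ≠ t) :
      (mulWord [] (v s)).elim (0 : K) (Pi.single m 1) = 0 := by
    cases hk : mulWord [] (v s) with
    | none => rfl
    | some k =>
      have hkm : k ≠ m := by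
        rintro rfl
        exact hs (huniq s hk)
      exact Pi.single_eq_of_ne hkm 1
  rw [Fintype.sum_eq_single t fun s hs => by rw [hother s hs, mul_zero, mul_zero], hm] at hcoeff
  simpa [wordSign_ne_zero] using hcoeff

theorem πB_eq_zero_of_mem_rels {x : FA K n} (hx : x ∈ rels K n) : πB K n x = 0 :=
  (RingQuot.mkAlgHom_rel K (show BRel K n x 0 from ⟨hx, rfl⟩)).trans (map_zero _)

theorem πB_word_eq_zero_of_mem_zeroWords (hr : r ∈ zeroWords n) : πB K n (word K n r) = 0 :=
  πB_eq_zero_of_mem_rels (mem_rels_iff.2 (.inl ⟨r, hr, rfl⟩))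

theorem πB_word_cab (i : Fin n) :
    πB K n (word K n [c i.succ, a i.succ, b i.succ]) =
      (-1 : K) • πB K n (word K n [a i.castSucc, b i.castSucc, c i.castSucc]) := by
  set A := πB K n (word K n [a i.castSucc, b i.castSucc, c i.castSucc])
  set C := πB K n (word K n [c i.succ, a i.succ, b i.succ])
  have hAC : A + C = 0 := by
    rw [← map_add]
    exact πB_eq_zero_of_mem_rels (mem_rels_iff.2 (.inr ⟨i, rfl⟩))
  calc
    C = ((-1 : K) + 1) • A + C := by rw [neg_add_cancel, zero_smul, zero_add]
    _ = (-1 : K) • A + (A + C) := by rw [add_smul, one_smul, add_assoc]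
    _ = (-1 : K) • A := by rw [hAC, add_zero]

theorem πB_word_append (u v : List (Gen n)) :
    πB K n (word K n (u ++ v)) = πB K n (word K n u) * πB K n (word K n v) := by
  rw [word_append, map_mul]

theorem IsNormalMul.exists_πB_word_concat_eq_smul (h : IsNormalMul l g m) :
    ∃ ε : K, πB K n (word K n (l ++ [g])) = ε • πB K n (word K n m) := by
  rcases h with ⟨-, rfl⟩ | ⟨u, i, -, rfl, rfl, rfl⟩
  · exact ⟨1, (one_smul K _).symm⟩
  · refine ⟨-1, ?_⟩
    rw [List.append_assoc, πB_word_append, πB_word_append u, ← mul_smul_comm, ← πB_word_cab]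
    rfl

theorem πB_word_concat_eq_zero (hl : Good n l) (h : mulLetter l g = none) :
    πB K n (word K n (l ++ [g])) = 0 := by
  have not_isNormalMul (m : List (Gen n)) : ¬ IsNormalMul l g m := by
    simp [← mulLetter_eq_some_iff, h]
  have not_good : ¬ Good n (l ++ [g]) := fun hg => not_isNormalMul _ (.inl ⟨hg, rfl⟩)
  obtain ⟨r, hr, u, hu⟩ : ∃ r ∈ Rwords' n, r <:+ l ++ [g] := by
    simpa [good_concat_iff, hl] using not_good
  rcases mem_Rwords'_iff.1 hr with hr | ⟨i, rfl⟩
  · rw [← hu, πB_word_append, πB_word_eq_zero_of_mem_zeroWords hr, mul_zero]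
  · obtain ⟨rfl, hg⟩ : u ++ [c i.succ, a i.succ] = l ∧ [b i.succ] = [g] :=
      List.append_inj' (by simpa using hu) rfl
    exact absurd (.inr ⟨u, i, hl, rfl, (List.singleton_inj.1 hg).symm, rfl⟩) (not_isNormalMul _)

theorem πB_word_append_eq_zero (hl : Good n l) (h : mulWord l w = none) :
    πB K n (word K n (l ++ w)) = 0 := by
  induction w generalizing l with
  | nil => simp [mulWord_nil_right] at h
  | cons g w ih =>
    rw [List.append_cons, πB_word_append]
    cases hm : mulLetter l g with
    | none => rw [πB_word_concat_eq_zero hl hm, zero_mul]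
    | some m =>
      have hlgm := mulLetter_eq_some_iff.1 hm
      have hmw : πB K n (word K n m) * πB K n (word K n w) = 0 := by
        rw [← πB_word_append]
        exact ih hlgm.good (by simpa [mulWord_cons, hm] using h)
      obtain ⟨ε, hε⟩ := hlgm.exists_πB_word_concat_eq_smul (K := K)
      rw [hε, smul_mul_assoc, hmw, smul_zero]

end Algebra

theorem stmt_1_general (K : Type) [Field K] (n : ℕ) (x : List (Gen n))
    {ι : Type*} [Fintype ι] (w : ι → List (Gen n)) (hw_inj : Function.Injective w)
    (hw_good : ∀ t, Good n (w t)) (α : ι → K) (hα : ∀ t, α t ≠ 0)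
    (hann : (∑ t, α t • πB K n (word K n (w t))) * πB K n (word K n x) = 0) :
    ∀ t, πB K n (word K n (w t ++ x)) = 0 := by
  intro t
  have hsum : ∑ s, α s • πB K n (word K n (w s ++ x)) = 0 := by
    simpa only [Finset.sum_mul, smul_mul_assoc, ← πB_word_append] using hann
  have normal_form (s : ι) : mulWord [] (w s ++ x) = mulWord (w s) x := by
    rw [mulWord_append, (hw_good s).mulWord_nil_left, Option.bind_some]
  cases hm : mulWord (w t) x with
  | none => exact πB_word_append_eq_zero (hw_good t) hm
  | some m =>
    refine absurd (coeff_eq_zero_of_sum_πB_word_eq_zero hsum ((normal_form t).trans hm) ?_) (hα t)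
    intro s hs
    exact hw_inj (mulWord_left_injective ((normal_form s).symm.trans hs) hm)

/-- Proposition 2.3. Let `x = π_B(x̂)` be a nonzero monomial, with `x̂` the
canonical (good) pure tensor lifting it.  Let `w` be a homogeneous element of degree `d` of
the left annihilator of `x`, with canonical lift `ŵ = Σ_t α_t w_t`, where the `w_t` are
distinct good pure tensors of degree `d` and `α_t ≠ 0`.  Then `π_B(w_t x̂) = 0` for all `t`. -/
theorem stmt_1 (K : Type) [Field K] (n : ℕ)
    (xh : List (Gen n)) (hx_good : Good n xh) (hx_ne : πB K n (word K n xh) ≠ 0)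
    (d k : ℕ) (w : Fin k → List (Gen n)) (hw_inj : Function.Injective w)
    (hw_good : ∀ t, Good n (w t)) (hw_deg : ∀ t, (w t).length = d)
    (α : Fin k → K) (hα : ∀ t, α t ≠ 0)
    (hann : (∑ t, α t • πB K n (word K n (w t))) * πB K n (word K n xh) = 0) :
    ∀ t, πB K n (word K n (w t ++ xh)) = 0 := by
  exact stmt_1_general K n xh w hw_inj hw_good α hα hann
end

section
/- Let 1 ≤ i ≤ n−1. Consider the maps of free left B-modules φ : B² → B, (w, x) ↦ w b_i c_i + x b_{i+1}, and ψ : B → B², z ↦ (z a_i, z c_{i+1} a_{i+1}). Then (i) ker ψ = im φ, and (ii) ker φ = im ψ; that is, the four-term complex B² → B → B² → B with differentials φ, ψ, φ is exact at the two middle positions. -/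
/-!
Orient the relations as the rewriting system `a_j b_j c_j ↦ -c_{j+1} a_{j+1} b_{j+1}` together with
`b_{j+1} a_j`, `c_0 a_0`, `b_{j+1} c_{j+1} a_{j+1}`, `c_j c_{j+1} ↦ 0`. It is confluent, which
amounts to saying that `B` acts on the right on the span of the irreducible words; so `B` may be
replaced by this span. There right multiplication by `a_i` sends words to words injectively, except
that for `i ≥ 1` it kills exactly the words ending in `b_i c_i` or `b_{i+1}`; this is (i).

No left-hand side ends in a `b`, so right multiplication by `b_{i+1}` is injective with image the
words ending in `b_{i+1}`, while `w b_i c_i` is irreducible unless `w` ends in `a_i`, in which case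
its normal form ends in `b_{i+1}`. Hence `w b_i c_i + x b_{i+1} = 0` forces `w = z a_i`, and then
`x b_{i+1} = -z a_i b_i c_i = z c_{i+1} a_{i+1} b_{i+1}` forces `x = z c_{i+1} a_{i+1}`; this
is (ii).
-/

namespace BAlgebra

section WordSpan

variable {α : Type*} (R : Type*) [Semiring R] (N : List α → Prop)

/-- The free `R`-module on the words satisfying `N`. Words are read from right to left, the head of
the list being the last letter, so that right multiplication by a letter is `List.cons`. -/
abbrev WordSpan : Type _ := {w : List α // N w} →₀ R

open Classical in
/-- The basis vector of the word `w`, and `0` if `w` does not satisfy `N`. -/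
noncomputable def word (w : List α) : WordSpan R N :=
  if h : N w then Finsupp.single ⟨w, h⟩ 1 else 0

variable {R N} {M : Type*} [AddCommMonoid M] [Module R M]

lemma word_of_not {w : List α} (h : ¬ N w) : word R N w = 0 := dif_neg h

/-- The linear extension of a function on words. -/
noncomputable def liftWord (f : List α → M) : WordSpan R N →ₗ[R] M :=
  Finsupp.linearCombination R fun w => f w.1

lemma liftWord_word (f : List α → M) {w : List α} (h : N w) :
    liftWord f (word R N w) = f w := by
  simp [liftWord, word, h]

lemma wordSpan_hom_ext {f g : WordSpan R N →ₗ[R] M}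
    (h : ∀ w, N w → f (word R N w) = g (word R N w)) : f = g := by
  refine Finsupp.lhom_ext' fun ⟨w, hw⟩ => LinearMap.ext_ring ?_
  simpa [word, hw] using h w hw

open Classical in
/-- Right division by the word `p`: deletes the final segment `p` from the words ending in `p` and
kills all other words. -/
noncomputable def stripSuffix (p : List α) : WordSpan R N →ₗ[R] WordSpan R N :=
  liftWord fun w => if p <+: w then word R N (w.drop p.length) else 0

lemma stripSuffix_word_append {p w : List α} (h : N (p ++ w)) :
    stripSuffix p (word R N (p ++ w)) = word R N w := by
  simp [stripSuffix, liftWord_word _ h]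

lemma stripSuffix_word_cons {x : α} {w : List α} (h : N (x :: w)) :
    stripSuffix [x] (word R N (x :: w)) = word R N w :=
  stripSuffix_word_append h

lemma stripSuffix_word_cons_cons {x y : α} {w : List α} (h : N (x :: y :: w)) :
    stripSuffix [x, y] (word R N (x :: y :: w)) = word R N w :=
  stripSuffix_word_append h

lemma stripSuffix_word_of_not_prefix {p w : List α} (h : ¬ p <+: w) :
    stripSuffix p (word R N w) = 0 := by
  by_cases hw : N w
  · simp [stripSuffix, liftWord_word _ hw, h]
  · rw [word_of_not hw, map_zero]

end WordSpan

/-- The generators of `B`, indexed by all natural numbers; those of index above `n` stand for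
`0`. -/
inductive Letter : Type
  | a : ℕ → Letter
  | b : ℕ → Letter
  | c : ℕ → Letter

/-- The index of a generator. -/
def Letter.index : Letter → ℕ
  | .a j => j
  | .b j => j
  | .c j => j

open Letter

/-- The words ending in a monomial that is a relation of `B`, or in a letter that is `0`. -/
inductive EndsInZero (n : ℕ) : List Letter → Prop
  | b_a (j : ℕ) (u : List Letter) : EndsInZero n (a j :: b (j + 1) :: u)
  | c_a (u : List Letter) : EndsInZero n (a 0 :: c 0 :: u)
  | b_c_a (j : ℕ) (u : List Letter) : EndsInZero n (a (j + 1) :: c (j + 1) :: b (j + 1) :: u)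
  | c_c (j : ℕ) (u : List Letter) : EndsInZero n (c (j + 1) :: c j :: u)
  | out_of_range {x : Letter} (hx : n < x.index) (u : List Letter) : EndsInZero n (x :: u)

/-- The words ending in some `a_j b_j c_j`, the monomial that is rewritten to
`-c_{j+1} a_{j+1} b_{j+1}`. -/
inductive EndsInABC : List Letter → Prop
  | intro (j : ℕ) (u : List Letter) : EndsInABC (c j :: b j :: a j :: u)

/-- The normal words: those with no initial segment ending in a relation or in a rewritable
monomial. -/
def Normal (n : ℕ) : List Letter → Prop
  | [] => True
  | x :: w => ¬ EndsInZero n (x :: w) ∧ ¬ EndsInABC (x :: w) ∧ Normal n w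

section NormalWords

variable {n : ℕ}

lemma Normal.not_endsInZero {w : List Letter} (h : Normal n w) : ¬ EndsInZero n w := by
  cases w with
  | nil => rintro ⟨⟩
  | cons x w => exact h.1

lemma Normal.not_endsInABC {w : List Letter} (h : Normal n w) : ¬ EndsInABC w := by
  cases w with
  | nil => rintro ⟨⟩
  | cons x w => exact h.2.1

lemma Normal.of_cons {x : Letter} {w : List Letter} (h : Normal n (x :: w)) : Normal n w := h.2.2

lemma Normal.index_le {x : Letter} {w : List Letter} (h : Normal n (x :: w)) : x.index ≤ n :=
  not_lt.1 fun hx => h.not_endsInZero (.out_of_range hx w)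

lemma Normal.cons_b {j : ℕ} {w : List Letter} (hj : j ≤ n) (hw : Normal n w) :
    Normal n (b j :: w) := by
  refine ⟨?_, ?_, hw⟩
  · rintro (_ | _ | _ | _ | ⟨hj', _⟩)
    exact hj.not_gt hj'
  · rintro ⟨⟩

lemma Normal.cons_c_b {j : ℕ} {w : List Letter} (hj : j ≤ n) (hw : Normal n w)
    (ha : ¬ [a j] <+: w) : Normal n (c j :: b j :: w) := by
  refine ⟨?_, ?_, hw.cons_b hj⟩
  · rintro (_ | _ | _ | _ | ⟨hj', _⟩)
    exact hj.not_gt hj'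
  · rintro ⟨_, u⟩
    exact ha ⟨u, rfl⟩

lemma normal_cons_a_or_eq_cons_b_or_eq_cons_c_b {j : ℕ} (hj : j + 1 ≤ n) {w : List Letter}
    (hw : Normal n w) :
    Normal n (a (j + 1) :: w) ∨ (∃ u, w = b (j + 2) :: u) ∨
      ∃ u, w = c (j + 1) :: b (j + 1) :: u := by
  refine or_iff_not_imp_right.2 fun h => ⟨?_, ?_, hw⟩
  · rintro (⟨_, u⟩ | _ | ⟨_, u⟩ | _ | ⟨hj', _⟩)
    · exact h (.inl ⟨u, rfl⟩)
    · exact h (.inr ⟨u, rfl⟩)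
    · exact hj.not_gt hj'
  · rintro ⟨⟩

lemma Normal.b_a_of_b_a_c {j : ℕ} {u : List Letter}
    (h : Normal n (b (j + 1) :: a (j + 1) :: c (j + 1) :: u)) : Normal n (b j :: a j :: u) := by
  have hj : j ≤ n := j.le_succ.trans h.index_le
  have hac := h.of_cons
  have hc := hac.of_cons
  refine Normal.cons_b hj ⟨?_, ?_, hc.of_cons⟩
  · rintro (⟨_, v⟩ | ⟨v⟩ | ⟨i, v⟩ | _ | ⟨hj', _⟩)
    · exact hac.not_endsInZero (.b_c_a j v)
    · exact hc.not_endsInZero (.c_c 0 v)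
    · exact hc.not_endsInZero (.c_c (i + 1) _)
    · exact hj.not_gt hj'
  · rintro ⟨⟩

end NormalWords

section Action

variable (K : Type) [Field K] (n : ℕ)

/-- The vector `w x` for a normal word `w` and a letter `x`, rewritten to normal words. -/
noncomputable def mulLetterWord : Letter → List Letter → WordSpan K (Normal n)
  | c j, b k :: a l :: u =>
      if k = j ∧ l = j then - word K (Normal n) (b (j + 1) :: a (j + 1) :: c (j + 1) :: u)
      else word K (Normal n) (c j :: b k :: a l :: u)
  | x, w => word K (Normal n) (x :: w)

/-- Right multiplication by a letter on the span of the normal words; a product of letters acts by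
the composition of these maps in the opposite order. -/
noncomputable def mulLetter (x : Letter) : Module.End K (WordSpan K (Normal n)) :=
  liftWord (mulLetterWord K n x)

variable {K n}

lemma mulLetterWord_of_not_endsInABC {x : Letter} {w : List Letter} (h : ¬ EndsInABC (x :: w)) :
    mulLetterWord K n x w = word K (Normal n) (x :: w) := by
  unfold mulLetterWord
  split
  · refine if_neg ?_
    rintro ⟨rfl, rfl⟩
    exact h ⟨_, _⟩
  · rfl

lemma mulLetter_word (x : Letter) (w : List Letter) :
    mulLetter K n x (word K (Normal n) w) = mulLetterWord K n x w := by
  by_cases hw : Normal n w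
  · exact liftWord_word _ hw
  rw [word_of_not hw, map_zero]
  by_cases habc : EndsInABC (x :: w)
  · obtain ⟨j, u⟩ := habc
    simp [mulLetterWord, word_of_not (mt Normal.b_a_of_b_a_c hw)]
  · rw [mulLetterWord_of_not_endsInABC habc, word_of_not fun h => hw h.of_cons]

lemma mulLetter_word_of_not_endsInABC {x : Letter} {w : List Letter} (h : ¬ EndsInABC (x :: w)) :
    mulLetter K n x (word K (Normal n) w) = word K (Normal n) (x :: w) := by
  rw [mulLetter_word, mulLetterWord_of_not_endsInABC h]

lemma mulLetter_a_word (j : ℕ) (w : List Letter) :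
    mulLetter K n (a j) (word K (Normal n) w) = word K (Normal n) (a j :: w) :=
  mulLetter_word_of_not_endsInABC nofun

lemma mulLetter_b_word (j : ℕ) (w : List Letter) :
    mulLetter K n (b j) (word K (Normal n) w) = word K (Normal n) (b j :: w) :=
  mulLetter_word_of_not_endsInABC nofun

lemma mulLetter_c_word_b_a (j : ℕ) (u : List Letter) :
    mulLetter K n (c j) (word K (Normal n) (b j :: a j :: u)) =
      - word K (Normal n) (b (j + 1) :: a (j + 1) :: c (j + 1) :: u) := by
  simp [mulLetter_word, mulLetterWord]

lemma word_of_endsInZero {w : List Letter} (h : EndsInZero n w) : word K (Normal n) w = 0 :=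
  word_of_not fun hw => hw.not_endsInZero h

lemma word_cons_of_word_eq_zero (x : Letter) {w : List Letter} (h : word K (Normal n) w = 0) :
    word K (Normal n) (x :: w) = 0 :=
  word_of_not fun hx => by simp [word, hx.of_cons] at h

lemma mulLetter_of_lt_index {x : Letter} (hx : n < x.index) : mulLetter K n x = 0 := by
  refine wordSpan_hom_ext fun w _ => ?_
  rw [LinearMap.zero_apply]
  by_cases habc : EndsInABC (x :: w)
  · obtain ⟨j, u⟩ := habc
    rw [mulLetter_c_word_b_a, word_of_endsInZero (.out_of_range (Nat.lt_succ_of_lt hx) _), neg_zero]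
  · rw [mulLetter_word_of_not_endsInABC habc, word_of_endsInZero (.out_of_range hx _)]

lemma mulLetter_c_a_zero : mulLetter K n (a 0) * mulLetter K n (c 0) = 0 := by
  refine wordSpan_hom_ext fun w _ => ?_
  rw [Module.End.mul_apply, LinearMap.zero_apply]
  by_cases habc : EndsInABC (c 0 :: w)
  · obtain ⟨_, u⟩ := habc
    rw [mulLetter_c_word_b_a, map_neg, mulLetter_a_word, word_of_endsInZero (.b_a 0 _), neg_zero]
  · rw [mulLetter_word_of_not_endsInABC habc, mulLetter_a_word, word_of_endsInZero (.c_a w)]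

lemma mulLetter_a_b_c_add_c_a_b (j : ℕ) :
    mulLetter K n (c j) * mulLetter K n (b j) * mulLetter K n (a j) +
      mulLetter K n (b (j + 1)) * mulLetter K n (a (j + 1)) * mulLetter K n (c (j + 1)) = 0 := by
  refine wordSpan_hom_ext fun w _ => ?_
  simp only [LinearMap.add_apply, Module.End.mul_apply, LinearMap.zero_apply, mulLetter_a_word,
    mulLetter_b_word, mulLetter_c_word_b_a]
  by_cases habc : EndsInABC (c (j + 1) :: w)
  · obtain ⟨_, u⟩ := habc
    rw [mulLetter_c_word_b_a, map_neg, map_neg, mulLetter_a_word,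
      word_of_endsInZero (.b_a (j + 1) _), map_zero,
      word_cons_of_word_eq_zero _ (word_of_endsInZero (.b_c_a j _)), neg_zero, add_zero]
  · rw [mulLetter_word_of_not_endsInABC habc, mulLetter_a_word, mulLetter_b_word, neg_add_cancel]

lemma mulLetter_a_b_c_last :
    mulLetter K n (c n) * mulLetter K n (b n) * mulLetter K n (a n) = 0 := by
  have h := mulLetter_a_b_c_add_c_a_b (K := K) (n := n) n
  rwa [mulLetter_of_lt_index (x := a (n + 1)) n.lt_succ_self, mul_zero, zero_mul, add_zero] at h

lemma mulLetter_b_c_a (j : ℕ) :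
    mulLetter K n (a (j + 1)) * mulLetter K n (c (j + 1)) * mulLetter K n (b (j + 1)) = 0 := by
  refine wordSpan_hom_ext fun w _ => ?_
  rw [Module.End.mul_apply, Module.End.mul_apply, mulLetter_b_word, LinearMap.zero_apply]
  by_cases habc : EndsInABC (c (j + 1) :: b (j + 1) :: w)
  · obtain ⟨_, u⟩ := habc
    rw [mulLetter_c_word_b_a, map_neg, mulLetter_a_word, word_of_endsInZero (.b_a (j + 1) _),
      neg_zero]
  · rw [mulLetter_word_of_not_endsInABC habc, mulLetter_a_word, word_of_endsInZero (.b_c_a j w)]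

lemma mulLetter_c_c (j : ℕ) : mulLetter K n (c (j + 1)) * mulLetter K n (c j) = 0 := by
  refine wordSpan_hom_ext fun w _ => ?_
  rw [Module.End.mul_apply, LinearMap.zero_apply]
  by_cases habc : EndsInABC (c j :: w)
  · obtain ⟨_, u⟩ := habc
    have hcc := word_of_endsInZero (K := K) (n := n) (.c_c (j + 1) u)
    rw [mulLetter_c_word_b_a, map_neg, mulLetter_c_word_b_a,
      word_cons_of_word_eq_zero _ (word_cons_of_word_eq_zero _ hcc), neg_zero, neg_zero]
  · rw [mulLetter_word_of_not_endsInABC habc, mulLetter_word_of_not_endsInABC (by rintro ⟨⟩),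
      word_of_endsInZero (.c_c j w)]

lemma mulLetter_b_a (j : ℕ) : mulLetter K n (a j) * mulLetter K n (b (j + 1)) = 0 := by
  refine wordSpan_hom_ext fun w _ => ?_
  rw [Module.End.mul_apply, mulLetter_b_word, mulLetter_a_word, word_of_endsInZero (.b_a j w),
    LinearMap.zero_apply]

end Action

section Representation

/-- The letter of a generator of the tensor algebra. -/
def Letter.ofGen {n : ℕ} : Gen n → Letter
  | .a j => a j
  | .b j => b j
  | .c j => c j

lemma Letter.exists_ofGen_eq {n : ℕ} {x : Letter} (hx : x.index ≤ n) :
    ∃ g : Gen n, ofGen g = x := by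
  cases x with
  | a j => exact ⟨.a ⟨j, Nat.lt_succ_of_le hx⟩, rfl⟩
  | b j => exact ⟨.b ⟨j, Nat.lt_succ_of_le hx⟩, rfl⟩
  | c j => exact ⟨.c ⟨j, Nat.lt_succ_of_le hx⟩, rfl⟩

variable (K : Type) [Field K] (n : ℕ)

/-- The element of the tensor algebra denoted by a letter. -/
noncomputable def Letter.toFA : Letter → FA K n
  | a j => ga K n j
  | b j => gb K n j
  | c j => gc K n j

/-- The element of `B` denoted by a letter. -/
noncomputable def Letter.toB (x : Letter) : B K n := πB K n (x.toFA K n)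

variable {K n}

lemma Letter.toFA_ofGen (g : Gen n) : (ofGen g).toFA K n = FreeAlgebra.ι K g := by
  cases g with
  | a j => simp [ofGen, toFA, ga, Fin.is_le]
  | b j => simp [ofGen, toFA, gb, Fin.is_le]
  | c j => simp [ofGen, toFA, gc, Fin.is_le]

lemma Letter.toFA_of_lt_index {x : Letter} (hx : n < x.index) : x.toFA K n = 0 := by
  cases x <;> simp_all [toFA, ga, gb, gc, index]

lemma Letter.toB_of_lt_index {x : Letter} (hx : n < x.index) : x.toB K n = 0 := by
  rw [toB, toFA_of_lt_index hx, map_zero]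

variable (K n)

/-- The right action of the tensor algebra on the span of the normal words. -/
noncomputable def freeAction : FA K n →ₐ[K] (Module.End K (WordSpan K (Normal n)))ᵐᵒᵖ :=
  FreeAlgebra.lift K fun g => .op (mulLetter K n (ofGen g))

variable {K n}

lemma freeAction_toFA (x : Letter) :
    freeAction K n (x.toFA K n) = .op (mulLetter K n x) := by
  rcases le_or_gt x.index n with hx | hx
  · obtain ⟨g, rfl⟩ := exists_ofGen_eq hx
    rw [toFA_ofGen, freeAction, FreeAlgebra.lift_ι_apply]
  · rw [toFA_of_lt_index hx, mulLetter_of_lt_index hx, map_zero, MulOpposite.op_zero]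

lemma mem_rels_iff {x : FA K n} : x ∈ rels K n ↔
    x = (a n).toFA K n * (b n).toFA K n * (c n).toFA K n ∨
    x = (c 0).toFA K n * (a 0).toFA K n ∨
    ∃ j < n,
      x = (a j).toFA K n * (b j).toFA K n * (c j).toFA K n +
        (c (j + 1)).toFA K n * (a (j + 1)).toFA K n * (b (j + 1)).toFA K n ∨
      x = (b (j + 1)).toFA K n * (c (j + 1)).toFA K n * (a (j + 1)).toFA K n ∨
      x = (c j).toFA K n * (c (j + 1)).toFA K n ∨
      x = (b (j + 1)).toFA K n * (a j).toFA K n :=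
  Iff.rfl

lemma freeAction_of_mem_rels {x : FA K n} (hx : x ∈ rels K n) : freeAction K n x = 0 := by
  apply MulOpposite.unop_injective
  rcases mem_rels_iff.1 hx with rfl | rfl | ⟨j, -, rfl | rfl | rfl | rfl⟩ <;>
    simp only [map_add, map_mul, freeAction_toFA, MulOpposite.unop_add, MulOpposite.unop_mul,
      MulOpposite.unop_op, MulOpposite.unop_zero, ← mul_assoc]
  · exact mulLetter_a_b_c_last
  · exact mulLetter_c_a_zero
  · exact mulLetter_a_b_c_add_c_a_b j
  · exact mulLetter_b_c_a j
  · exact mulLetter_c_c j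
  · exact mulLetter_b_a j

variable (K n)

/-- The right action of `B` on the span of the normal words. -/
noncomputable def action : B K n →ₐ[K] (Module.End K (WordSpan K (Normal n)))ᵐᵒᵖ :=
  RingQuot.liftAlgHom K ⟨freeAction K n, by
    rintro x y ⟨hx, rfl⟩
    rw [freeAction_of_mem_rels hx, map_zero]⟩

/-- The normal form of an element of `B`, obtained by letting it act on the empty word. -/
noncomputable def normalForm : B K n →ₗ[K] WordSpan K (Normal n) :=
  LinearMap.applyₗ (word K (Normal n) []) ∘ₗ
    (MulOpposite.opLinearEquiv K).symm.toLinearMap ∘ₗ (action K n).toLinearMap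

variable {K n}

lemma action_toB (x : Letter) : action K n (x.toB K n) = .op (mulLetter K n x) := by
  rw [toB, πB, action, RingQuot.liftAlgHom_mkAlgHom_apply, freeAction_toFA]

lemma normalForm_mul_toB (z : B K n) (x : Letter) :
    normalForm K n (z * x.toB K n) = mulLetter K n x (normalForm K n z) := by
  simp [normalForm, action_toB]

end Representation

section Relations

variable {K : Type} [Field K] {n : ℕ}

lemma πB_of_mem_rels {x : FA K n} (hx : x ∈ rels K n) : πB K n x = 0 := by
  rw [← map_zero (πB K n)]
  exact RingQuot.mkAlgHom_rel K ⟨hx, rfl⟩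

lemma toB_c_a_zero : (c 0).toB K n * (a 0).toB K n = 0 := by
  simpa only [toB, map_mul] using πB_of_mem_rels (mem_rels_iff.2 (.inr (.inl rfl)))

lemma toB_a_b_c_add_c_a_b {j : ℕ} (hj : j ≤ n) :
    (a j).toB K n * (b j).toB K n * (c j).toB K n +
      (c (j + 1)).toB K n * (a (j + 1)).toB K n * (b (j + 1)).toB K n = 0 := by
  rcases hj.eq_or_lt with rfl | hj
  · rw [toB_of_lt_index (x := a (j + 1)) j.lt_succ_self, mul_zero, zero_mul, add_zero]
    simpa only [toB, map_mul] using πB_of_mem_rels (mem_rels_iff.2 (.inl rfl))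
  · simpa only [toB, map_add, map_mul] using
      πB_of_mem_rels (mem_rels_iff.2 (.inr (.inr ⟨j, hj, .inl rfl⟩)))

lemma toB_b_c_a (j : ℕ) :
    (b (j + 1)).toB K n * (c (j + 1)).toB K n * (a (j + 1)).toB K n = 0 := by
  rcases lt_or_ge j n with hj | hj
  · simpa only [toB, map_mul] using
      πB_of_mem_rels (mem_rels_iff.2 (.inr (.inr ⟨j, hj, .inr (.inl rfl)⟩)))
  · rw [toB_of_lt_index (x := a (j + 1)) (Nat.lt_succ_of_le hj), mul_zero]

lemma toB_c_c (j : ℕ) : (c j).toB K n * (c (j + 1)).toB K n = 0 := by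
  rcases lt_or_ge j n with hj | hj
  · simpa only [toB, map_mul] using
      πB_of_mem_rels (mem_rels_iff.2 (.inr (.inr ⟨j, hj, .inr (.inr (.inl rfl))⟩)))
  · rw [toB_of_lt_index (x := c (j + 1)) (Nat.lt_succ_of_le hj), mul_zero]

lemma toB_b_a (j : ℕ) : (b (j + 1)).toB K n * (a j).toB K n = 0 := by
  rcases lt_or_ge j n with hj | hj
  · simpa only [toB, map_mul] using
      πB_of_mem_rels (mem_rels_iff.2 (.inr (.inr ⟨j, hj, .inr (.inr (.inr rfl))⟩)))
  · rw [toB_of_lt_index (x := b (j + 1)) (Nat.lt_succ_of_le hj), zero_mul]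

end Relations

section Evaluation

variable (K : Type) [Field K] (n : ℕ)

/-- The product in `B` of the letters of a word. -/
noncomputable def wordProd : List Letter → B K n
  | [] => 1
  | x :: w => wordProd w * x.toB K n

/-- Evaluation of linear combinations of normal words in `B`. -/
noncomputable def eval : WordSpan K (Normal n) →ₗ[K] B K n :=
  liftWord (wordProd K n)

variable {K n}

lemma wordProd_of_endsInZero {w : List Letter} (h : EndsInZero n w) : wordProd K n w = 0 := by
  cases h with
  | b_a j u => rw [wordProd, wordProd, mul_assoc, toB_b_a, mul_zero]
  | c_a u => rw [wordProd, wordProd, mul_assoc, toB_c_a_zero, mul_zero]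
  | b_c_a j u =>
    rw [wordProd, wordProd, wordProd, mul_assoc, mul_assoc, ← mul_assoc (toB K n _), toB_b_c_a,
      mul_zero]
  | c_c j u => rw [wordProd, wordProd, mul_assoc, toB_c_c, mul_zero]
  | out_of_range hx u => rw [wordProd, toB_of_lt_index hx, mul_zero]

lemma wordProd_a_b_c {j : ℕ} (hj : j ≤ n) (u : List Letter) :
    wordProd K n (c j :: b j :: a j :: u) =
      - wordProd K n (b (j + 1) :: a (j + 1) :: c (j + 1) :: u) := by
  have h := congrArg (wordProd K n u * ·) (toB_a_b_c_add_c_a_b (K := K) hj)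
  rw [eq_neg_iff_add_eq_zero]
  simpa only [wordProd, mul_add, mul_assoc, mul_zero] using h

lemma eval_word_cons {x : Letter} {w : List Letter} (hx : ¬ EndsInABC (x :: w))
    (hw : eval K n (word K (Normal n) w) = wordProd K n w) :
    eval K n (word K (Normal n) (x :: w)) = wordProd K n (x :: w) := by
  by_cases hN : Normal n w
  · by_cases hz : EndsInZero n (x :: w)
    · rw [word_of_endsInZero hz, wordProd_of_endsInZero hz, map_zero]
    · exact liftWord_word _ ⟨hz, hx, hN⟩
  · rw [word_of_not hN, map_zero] at hw
    rw [word_of_not fun h => hN h.of_cons, wordProd, ← hw, zero_mul, map_zero]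

lemma eval_word_b_a_c {j : ℕ} {u : List Letter} (h : Normal n (a j :: u)) :
    eval K n (word K (Normal n) (b (j + 1) :: a (j + 1) :: c (j + 1) :: u)) =
      wordProd K n (b (j + 1) :: a (j + 1) :: c (j + 1) :: u) := by
  have hc : ¬ EndsInABC (c (j + 1) :: u) := by
    rintro ⟨_, v⟩
    exact h.not_endsInZero (.b_a j _)
  exact eval_word_cons nofun (eval_word_cons nofun (eval_word_cons hc (liftWord_word _ h.of_cons)))

lemma eval_mulLetter (x : Letter) (m : WordSpan K (Normal n)) :
    eval K n (mulLetter K n x m) = eval K n m * x.toB K n := by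
  suffices h : eval K n ∘ₗ mulLetter K n x = LinearMap.mulRight K (x.toB K n) ∘ₗ eval K n from
    LinearMap.congr_fun h m
  refine wordSpan_hom_ext fun w hw => ?_
  have hev : eval K n (word K (Normal n) w) = wordProd K n w := liftWord_word _ hw
  rw [LinearMap.comp_apply, LinearMap.comp_apply, LinearMap.mulRight_apply, hev]
  change _ = wordProd K n (x :: w)
  by_cases habc : EndsInABC (x :: w)
  · obtain ⟨j, u⟩ := habc
    have hj : j ≤ n := hw.index_le
    rw [mulLetter_c_word_b_a, map_neg, eval_word_b_a_c hw.of_cons, wordProd_a_b_c hj]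
  · rw [mulLetter_word_of_not_endsInABC habc, eval_word_cons habc hev]

lemma eval_action (z : B K n) (m : WordSpan K (Normal n)) :
    eval K n ((action K n z).unop m) = eval K n m * z := by
  obtain ⟨x, rfl⟩ := RingQuot.mkAlgHom_surjective K (BRel K n) z
  induction x using FreeAlgebra.induction generalizing m with
  | grade0 r => simp [Algebra.algebraMap_eq_smul_one]
  | grade1 g =>
    rw [← toFA_ofGen]
    change eval K n ((action K n ((ofGen g).toB K n)).unop m) = eval K n m * (ofGen g).toB K n
    rw [action_toB, MulOpposite.unop_op, eval_mulLetter]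
  | mul x y hx hy => rw [map_mul, map_mul, MulOpposite.unop_mul, Module.End.mul_apply, hy, hx,
      mul_assoc]
  | add x y hx hy => rw [map_add, map_add, MulOpposite.unop_add, LinearMap.add_apply, map_add, hx,
      hy, mul_add]

lemma eval_normalForm (z : B K n) : eval K n (normalForm K n z) = z := by
  have h := eval_action z (word K (Normal n) [])
  rwa [show eval K n (word K (Normal n) []) = 1 from liftWord_word _ trivial, one_mul] at h

end Evaluation

section Exactness

variable {K : Type} [Field K] {n i : ℕ}

lemma stripSuffix_a_mulLetter_a_add (hi : 1 ≤ i) (hin : i ≤ n) (m : WordSpan K (Normal n)) :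
    stripSuffix [a i] (mulLetter K n (a i) m) +
      (mulLetter K n (c i) (mulLetter K n (b i) (stripSuffix [c i, b i] m)) +
        mulLetter K n (b (i + 1)) (stripSuffix [b (i + 1)] m)) = m := by
  suffices h : stripSuffix [a i] ∘ₗ mulLetter K n (a i) +
      (mulLetter K n (c i) ∘ₗ mulLetter K n (b i) ∘ₗ stripSuffix [c i, b i] +
        mulLetter K n (b (i + 1)) ∘ₗ stripSuffix [b (i + 1)]) = LinearMap.id from
    LinearMap.congr_fun h m
  refine wordSpan_hom_ext fun w hw => ?_
  simp only [LinearMap.add_apply, LinearMap.comp_apply, LinearMap.id_apply, mulLetter_a_word]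
  obtain ⟨j, rfl⟩ := Nat.exists_eq_add_of_le' hi
  rcases normal_cons_a_or_eq_cons_b_or_eq_cons_c_b hin hw with ha | ⟨u, rfl⟩ | ⟨u, rfl⟩
  · have hcb : ¬ [c (j + 1), b (j + 1)] <+: w := by
      rintro ⟨u, rfl⟩
      exact ha.not_endsInZero (.b_c_a j u)
    have hb : ¬ [b (j + 2)] <+: w := by
      rintro ⟨u, rfl⟩
      exact ha.not_endsInZero (.b_a (j + 1) u)
    rw [stripSuffix_word_cons ha, stripSuffix_word_of_not_prefix hcb,
      stripSuffix_word_of_not_prefix hb, map_zero, map_zero, map_zero, add_zero, add_zero]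
  · rw [word_of_endsInZero (.b_a (j + 1) u), stripSuffix_word_of_not_prefix (by simp),
      stripSuffix_word_cons hw, mulLetter_b_word]
    simp only [map_zero, zero_add]
  · rw [word_of_endsInZero (.b_c_a j u), stripSuffix_word_cons_cons hw,
      stripSuffix_word_of_not_prefix (p := [b (j + 2)]) (by simp), mulLetter_b_word,
      mulLetter_word_of_not_endsInABC hw.not_endsInABC]
    simp only [map_zero, zero_add, add_zero]

lemma stripSuffix_b_c_mulLetter_b_c_add (hin : i ≤ n) (m : WordSpan K (Normal n)) :
    stripSuffix [c i, b i] (mulLetter K n (c i) (mulLetter K n (b i) m)) +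
      mulLetter K n (a i) (stripSuffix [a i] m) = m := by
  suffices h : stripSuffix [c i, b i] ∘ₗ mulLetter K n (c i) ∘ₗ mulLetter K n (b i) +
      mulLetter K n (a i) ∘ₗ stripSuffix [a i] = LinearMap.id from LinearMap.congr_fun h m
  refine wordSpan_hom_ext fun w hw => ?_
  simp only [LinearMap.add_apply, LinearMap.comp_apply, LinearMap.id_apply, mulLetter_b_word]
  by_cases ha : [a i] <+: w
  · obtain ⟨u, rfl⟩ := ha
    rw [stripSuffix_word_append hw, mulLetter_a_word, List.singleton_append, mulLetter_c_word_b_a,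
      map_neg, stripSuffix_word_of_not_prefix (by simp), neg_zero, zero_add]
  · have hN : Normal n (c i :: b i :: w) := hw.cons_c_b hin ha
    rw [mulLetter_word_of_not_endsInABC hN.not_endsInABC, stripSuffix_word_cons_cons hN,
      stripSuffix_word_of_not_prefix ha, map_zero, add_zero]

lemma stripSuffix_b_c_mulLetter_b (j : ℕ) (m : WordSpan K (Normal n)) :
    stripSuffix [c i, b i] (mulLetter K n (b j) m) = 0 := by
  suffices h : stripSuffix [c i, b i] ∘ₗ mulLetter K n (b j) = 0 from LinearMap.congr_fun h m
  refine wordSpan_hom_ext fun w _ => ?_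
  rw [LinearMap.comp_apply, mulLetter_b_word, stripSuffix_word_of_not_prefix (by simp),
    LinearMap.zero_apply]

lemma stripSuffix_b_mulLetter_b (hin : i ≤ n) (m : WordSpan K (Normal n)) :
    stripSuffix [b i] (mulLetter K n (b i) m) = m := by
  suffices h : stripSuffix [b i] ∘ₗ mulLetter K n (b i) = LinearMap.id from
    LinearMap.congr_fun h m
  refine wordSpan_hom_ext fun w hw => ?_
  rw [LinearMap.comp_apply, mulLetter_b_word, stripSuffix_word_cons (hw.cons_b hin),
    LinearMap.id_apply]

lemma isRightRegular_toB_b (hin : i ≤ n) : IsRightRegular ((b i).toB K n) := by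
  intro x y hxy
  have h := congrArg (stripSuffix [b i] ∘ normalForm K n) hxy
  simp only [Function.comp_apply, normalForm_mul_toB, stripSuffix_b_mulLetter_b hin] at h
  rw [← eval_normalForm x, h, eval_normalForm]

theorem mul_toB_a_eq_zero_iff (hi : 1 ≤ i) (hin : i ≤ n) (z : B K n) :
    z * (a i).toB K n = 0 ↔
      ∃ w x, z = w * ((b i).toB K n * (c i).toB K n) + x * (b (i + 1)).toB K n := by
  constructor
  · intro hz
    have h := stripSuffix_a_mulLetter_a_add hi hin (normalForm K n z)
    rw [← normalForm_mul_toB, hz, map_zero, map_zero, zero_add] at h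
    refine ⟨eval K n (stripSuffix [c i, b i] (normalForm K n z)),
      eval K n (stripSuffix [b (i + 1)] (normalForm K n z)), ?_⟩
    rw [← mul_assoc, ← eval_mulLetter, ← eval_mulLetter, ← eval_mulLetter, ← map_add, h,
      eval_normalForm]
  · rintro ⟨w, x, rfl⟩
    obtain ⟨j, rfl⟩ := Nat.exists_eq_add_of_le' hi
    rw [add_mul, mul_assoc w, mul_assoc x, toB_b_c_a, toB_b_a, mul_zero, mul_zero, add_zero]

lemma mul_toB_c_a_eq_zero_of_mul_toB_a_eq_zero (hi : 1 ≤ i) (hin : i ≤ n) {z : B K n}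
    (hz : z * (a i).toB K n = 0) :
    z * ((c (i + 1)).toB K n * (a (i + 1)).toB K n) = 0 := by
  obtain ⟨w, x, rfl⟩ := (mul_toB_a_eq_zero_iff hi hin z).1 hz
  calc
    _ = w * (b i).toB K n * ((c i).toB K n * (c (i + 1)).toB K n) * (a (i + 1)).toB K n +
        x * ((b (i + 1)).toB K n * (c (i + 1)).toB K n * (a (i + 1)).toB K n) := by
      noncomm_ring
    _ = 0 := by rw [toB_c_c, toB_b_c_a, mul_zero, zero_mul, mul_zero, add_zero]

lemma exists_eq_mul_toB_a (hin : i ≤ n) {w x : B K n}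
    (h : w * ((b i).toB K n * (c i).toB K n) + x * (b (i + 1)).toB K n = 0) :
    ∃ z, w = z * (a i).toB K n := by
  have hs := congrArg (stripSuffix [c i, b i] ∘ normalForm K n) h
  simp only [Function.comp_apply, ← mul_assoc, map_add, normalForm_mul_toB, map_zero,
    stripSuffix_b_c_mulLetter_b, add_zero] at hs
  have hw := stripSuffix_b_c_mulLetter_b_c_add hin (normalForm K n w)
  rw [hs, zero_add] at hw
  exact ⟨eval K n (stripSuffix [a i] (normalForm K n w)), by
    rw [← eval_mulLetter, hw, eval_normalForm]⟩

theorem mul_toB_b_c_add_mul_toB_b_eq_zero_iff (hin : i < n) (w x : B K n) :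
    w * ((b i).toB K n * (c i).toB K n) + x * (b (i + 1)).toB K n = 0 ↔
      ∃ z, w = z * (a i).toB K n ∧ x = z * ((c (i + 1)).toB K n * (a (i + 1)).toB K n) := by
  have hrel (z : B K n) : z * (a i).toB K n * ((b i).toB K n * (c i).toB K n) +
      z * ((c (i + 1)).toB K n * (a (i + 1)).toB K n) * (b (i + 1)).toB K n = 0 := by
    have h := congrArg (z * ·) (toB_a_b_c_add_c_a_b (K := K) hin.le)
    simpa only [mul_add, mul_assoc, mul_zero] using h
  constructor
  · intro h
    obtain ⟨z, rfl⟩ := exists_eq_mul_toB_a hin.le h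
    exact ⟨z, rfl, isRightRegular_toB_b hin (add_left_cancel (h.trans (hrel z).symm))⟩
  · rintro ⟨z, rfl, rfl⟩
    exact hrel z

end Exactness

end BAlgebra

/-- Lemma 3.1, exactness of `B² → B → B² → B` at the two middle positions,
where `φ (w, x) = w b_i c_i + x b_{i+1}` and `ψ z = (z a_i, z c_{i+1} a_{i+1})`. -/
theorem stmt_5 (K : Type) [Field K] (n : ℕ) (i : ℕ) (h1 : 1 ≤ i) (h2 : i ≤ n - 1) :
    -- (i) ker ψ = im φ
    (∀ z : B K n,
      (z * aB K n i = 0 ∧ z * (cB K n (i+1) * aB K n (i+1)) = 0) ↔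
      (∃ w x : B K n, z = w * (bB K n i * cB K n i) + x * bB K n (i+1))) ∧
    -- (ii) ker φ = im ψ
    (∀ w x : B K n,
      (w * (bB K n i * cB K n i) + x * bB K n (i+1) = 0) ↔
      (∃ z : B K n, w = z * aB K n i ∧ x = z * (cB K n (i+1) * aB K n (i+1)))) := by
  have hin : i < n := by omega
  exact ⟨fun z =>
      (and_iff_left_of_imp
        (BAlgebra.mul_toB_c_a_eq_zero_of_mul_toB_a_eq_zero h1 hin.le)).trans
        (BAlgebra.mul_toB_a_eq_zero_iff h1 hin.le z),
    BAlgebra.mul_toB_b_c_add_mul_toB_b_eq_zero_iff hin⟩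
end

section
/- The 2-periodic complex of free left B-modules ⋯ → B → B² → B → B² → B → B a_0 → 0, in which the differentials alternate between the map B → B², z ↦ (z a_0 b_0, z c_1 a_1), and the map B² → B, (w, x) ↦ w c_0 + x b_1, and in which the augmentation B → B a_0 is z ↦ z a_0 (the differential immediately preceding the augmentation being (w,x) ↦ w c_0 + x b_1), is exact; i.e., it is a free resolution of the left ideal B a_0 of B. -/
/-!
Orient the relations as rewriting rules: `c₀ a₀`, `bᵢ cᵢ aᵢ`, `bᵢ₊₁ aᵢ` and `cᵢ cᵢ₊₁` go to `0`,
while `aᵢ bᵢ cᵢ` goes to `-cᵢ₊₁ aᵢ₊₁ bᵢ₊₁`. Applying the rules only at the right end of a word makes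
the letters act from the right on the span of *all* words, and these operators satisfy the
relations of `B`. Acting on the empty word embeds `B` into the span of words, with evaluation of
words as a retraction, so no basis of normal words is needed.

A product `z a₀` vanishes only if every word of `z` is killed by `a₀`, hence ends in `c₀` or `b₁`,
and the action of `bᵢ` is injective for `i ≤ n`. If `w c₀ + x b₁ = 0`, then every word of `w` ends
in `a₀ b₀`, since otherwise a word ending in `c₀` would survive; so `w = z a₀ b₀`, and cancelling
`b₁` in `x b₁ = -z a₀ b₀ c₀ = z c₁ a₁ b₁` gives `x = z c₁ a₁`.
-/

namespace Resolution

open Finsupp (single)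

/-- The symbols `aᵢ`, `bᵢ`, `cᵢ` for all `i : ℕ`. Leaving the index unbounded avoids case
distinctions at `i = n`; the truncation `bᵢ = 0` for `i > n` is part of `Relations`. -/
inductive Letter : Type
  | a (i : ℕ)
  | b (i : ℕ)
  | c (i : ℕ)

/-- The subscript of a symbol. -/
def Letter.index : Letter → ℕ
  | a i | b i | c i => i

/-- The defining relations of `B`, for elements `x l` of an arbitrary ring. With `bₙ₊₁ = 0` the
relation `aₙ bₙ cₙ = 0` becomes the case `i = n` of `abc_eq`; the case `i = 0` of `bca_eq_zero`
follows from `ca_eq_zero`. -/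
structure Relations {S : Type*} [Ring S] (n : ℕ) (x : Letter → S) : Prop where
  b_eq_zero : ∀ i, n < i → x (.b i) = 0
  ca_eq_zero : x (.c 0) * x (.a 0) = 0
  abc_eq : ∀ i, x (.a i) * x (.b i) * x (.c i) =
    -(x (.c (i + 1)) * x (.a (i + 1)) * x (.b (i + 1)))
  bca_eq_zero : ∀ i, x (.b i) * x (.c i) * x (.a i) = 0
  cc_eq_zero : ∀ i, x (.c i) * x (.c (i + 1)) = 0
  ba_eq_zero : ∀ i, x (.b (i + 1)) * x (.a i) = 0

namespace Relations

variable {S : Type*} [Ring S] {n : ℕ} {x : Letter → S}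

theorem mul_c_add_mul_b_mul_a (h : Relations n x) (w y : S) :
    (w * x (.c 0) + y * x (.b 1)) * x (.a 0) = 0 := by
  rw [add_mul, mul_assoc, mul_assoc, h.ca_eq_zero, h.ba_eq_zero, mul_zero, mul_zero, add_zero]

theorem mul_c_add_mul_b_mul_ca (h : Relations n x) (i : ℕ) (w y : S) :
    (w * x (.c i) + y * x (.b (i + 1))) * (x (.c (i + 1)) * x (.a (i + 1))) = 0 := by
  rw [add_mul, mul_assoc w, mul_assoc y, ← mul_assoc (x (.c i)), ← mul_assoc (x (.b (i + 1))),
    h.cc_eq_zero, h.bca_eq_zero, zero_mul, mul_zero, mul_zero, add_zero]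

theorem mul_ab_mul_c_add_mul_ca_mul_b (h : Relations n x) (i : ℕ) (z : S) :
    z * (x (.a i) * x (.b i)) * x (.c i) +
      z * (x (.c (i + 1)) * x (.a (i + 1))) * x (.b (i + 1)) = 0 := by
  rw [mul_assoc z, mul_assoc z, ← mul_add, h.abc_eq, neg_add_cancel, mul_zero]

end Relations

/-! ### The action of the letters on words -/

section Words

variable (R : Type*) [CommRing R] (n : ℕ)

/-- The free module on all words. A word is stored with its last letter at the head of the list, so
that `cons` is right multiplication by a letter. -/
abbrev WordSpace := List Letter →₀ R

/-- The words whose right multiple by `aᵢ` is rewritten to `0`. -/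
inductive KilledByA : ℕ → List Letter → Prop
  | ca (u) : KilledByA 0 (.c 0 :: u)
  | bca (i u) : KilledByA i (.c i :: .b i :: u)
  | ba (i u) : KilledByA i (.b (i + 1) :: u)

open scoped Classical in
/-- Right multiplication of a word by `aᵢ`. -/
noncomputable def wordMulA (i : ℕ) (u : List Letter) : WordSpace R :=
  if KilledByA i u then 0 else single (.a i :: u) 1

/-- Right multiplication of a word by `bᵢ`. -/
noncomputable def wordMulB (i : ℕ) (u : List Letter) : WordSpace R :=
  if i ≤ n then single (.b i :: u) 1 else 0

/-- Right multiplication by `aᵢ` on the span of words. -/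
noncomputable def mulA (i : ℕ) : Module.End R (WordSpace R) :=
  Finsupp.linearCombination R (wordMulA R i)

/-- Right multiplication by `bᵢ` on the span of words. -/
noncomputable def mulB (i : ℕ) : Module.End R (WordSpace R) :=
  Finsupp.linearCombination R (wordMulB R n i)

/-- Right multiplication of a word by `cᵢ`, rewriting `v aᵢ bᵢ cᵢ` to `-v cᵢ₊₁ aᵢ₊₁ bᵢ₊₁`
recursively. -/
noncomputable def wordMulC : ℕ → List Letter → WordSpace R
  | i, .b j :: .a k :: v =>
      if i = j ∧ i = k then -mulB R n (i + 1) (mulA R (i + 1) (wordMulC (i + 1) v))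
      else single (.c i :: .b j :: .a k :: v) 1
  | i, .c j :: v => if i = j + 1 then 0 else single (.c i :: .c j :: v) 1
  | i, u => single (.c i :: u) 1

/-- Right multiplication by `cᵢ` on the span of words. -/
noncomputable def mulC (i : ℕ) : Module.End R (WordSpace R) :=
  Finsupp.linearCombination R (wordMulC R n i)

/-- Right multiplication by a letter on the span of words. -/
noncomputable def mulLetter : Letter → Module.End R (WordSpace R)
  | .a i => mulA R i
  | .b i => mulB R n i
  | .c i => mulC R n i

@[simp]
theorem mulA_single (i : ℕ) (u : List Letter) : mulA R i (single u 1) = wordMulA R i u := by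
  simp [mulA]

@[simp]
theorem mulB_single (i : ℕ) (u : List Letter) : mulB R n i (single u 1) = wordMulB R n i u := by
  simp [mulB]

@[simp]
theorem mulC_single (i : ℕ) (u : List Letter) : mulC R n i (single u 1) = wordMulC R n i u := by
  simp [mulC]

variable {R n}

theorem wordMulA_of_killed {i : ℕ} {u : List Letter} (hu : KilledByA i u) :
    wordMulA R i u = 0 := if_pos hu

theorem wordMulA_of_not_killed {i : ℕ} {u : List Letter} (hu : ¬KilledByA i u) :
    wordMulA R i u = single (.a i :: u) 1 := if_neg hu

theorem wordMulB_of_le {i : ℕ} (hi : i ≤ n) (u : List Letter) :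
    wordMulB R n i u = single (.b i :: u) 1 := if_pos hi

@[simp]
theorem wordMulC_b_a (i : ℕ) (v : List Letter) :
    wordMulC R n i (.b i :: .a i :: v) =
      -mulB R n (i + 1) (mulA R (i + 1) (wordMulC R n (i + 1) v)) := by
  simp [wordMulC]

@[simp]
theorem wordMulC_succ_c (i : ℕ) (v : List Letter) : wordMulC R n (i + 1) (.c i :: v) = 0 := by
  simp [wordMulC]

variable (R n)

theorem mulB_eq_zero {i : ℕ} (hi : n < i) : mulB R n i = 0 :=
  Finsupp.basisSingleOne.ext fun u => by simp [wordMulB, hi.not_ge]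

theorem mulA_mul_mulB_succ (i : ℕ) : mulA R i * mulB R n (i + 1) = 0 := by
  refine Finsupp.basisSingleOne.ext fun u => ?_
  by_cases hi : i + 1 ≤ n
  · simp [wordMulB_of_le hi, wordMulA_of_killed (.ba i u)]
  · simp [wordMulB, hi]

theorem mulA_mulB_succ (i : ℕ) (m : WordSpace R) : mulA R i (mulB R n (i + 1) m) = 0 :=
  LinearMap.congr_fun (mulA_mul_mulB_succ R n i) m

theorem wordMulC_induction {P : ℕ → List Letter → WordSpace R → Prop}
    (abc : ∀ i v, P (i + 1) v (wordMulC R n (i + 1) v) →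
      P i (.b i :: .a i :: v) (-mulB R n (i + 1) (mulA R (i + 1) (wordMulC R n (i + 1) v))))
    (cc : ∀ i v, P (i + 1) (.c i :: v) 0)
    (irreducible : ∀ i u, P i u (single (.c i :: u) 1)) (i : ℕ) (u : List Letter) :
    P i u (wordMulC R n i u) := by
  fun_induction wordMulC R n i u with
  | case1 i j k v hijk ih =>
    obtain ⟨rfl, rfl⟩ := hijk
    exact abc i v ih
  | case3 j v => exact cc j v
  | _ => exact irreducible _ _

theorem mulA_wordMulC_b (i : ℕ) (u : List Letter) :
    mulA R i (wordMulC R n i (.b i :: u)) = 0 := by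
  refine wordMulC_induction R n (P := fun i t m => ∀ u, t = .b i :: u → mulA R i m = 0)
    ?_ ?_ ?_ i _ u rfl
  · intro i v _ u _
    rw [map_neg, mulA_mulB_succ, neg_zero]
  · intro i _ u _
    exact map_zero _
  · rintro i _ u rfl
    rw [mulA_single, wordMulA_of_killed (.bca i u)]

theorem mulA_mul_mulC_mul_mulB (i : ℕ) : mulA R i * (mulC R n i * mulB R n i) = 0 := by
  refine Finsupp.basisSingleOne.ext fun u => ?_
  by_cases hi : i ≤ n
  · simp [wordMulB_of_le hi, mulA_wordMulC_b]
  · simp [wordMulB, hi]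

theorem mulA_zero_wordMulC_zero (u : List Letter) : mulA R 0 (wordMulC R n 0 u) = 0 := by
  refine wordMulC_induction R n (P := fun i _ m => i = 0 → mulA R i m = 0) ?_ ?_ ?_ 0 u rfl
  · intro i _ _ _
    rw [map_neg, mulA_mulB_succ, neg_zero]
  · intro i _ _
    exact map_zero _
  · rintro _ u rfl
    rw [mulA_single, wordMulA_of_killed (.ca u)]

theorem mulA_zero_mul_mulC_zero : mulA R 0 * mulC R n 0 = 0 :=
  Finsupp.basisSingleOne.ext fun u => by simp [mulA_zero_wordMulC_zero]

theorem mulB_mulA_wordMulC_of_killed {i : ℕ} {u : List Letter} (hu : KilledByA i u) :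
    mulB R n (i + 1) (mulA R (i + 1) (wordMulC R n (i + 1) u)) = 0 := by
  cases hu with
  | ca | bca => rw [wordMulC_succ_c, map_zero, map_zero]
  | ba => rw [mulA_wordMulC_b, map_zero]

theorem mulC_mul_mulB_mul_mulA (i : ℕ) :
    mulC R n i * (mulB R n i * mulA R i) =
      -(mulB R n (i + 1) * (mulA R (i + 1) * mulC R n (i + 1))) := by
  refine Finsupp.basisSingleOne.ext fun u => ?_
  by_cases hu : KilledByA i u
  · simp [wordMulA_of_killed hu, mulB_mulA_wordMulC_of_killed R n hu]
  by_cases hi : i ≤ n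
  · simp [wordMulA_of_not_killed hu, wordMulB_of_le hi]
  · have hi : n < i := not_le.mp hi
    simp [mulB_eq_zero R n hi, mulB_eq_zero R n (Nat.lt_succ_of_lt hi)]

theorem mulC_mulB_mulA (i : ℕ) (m : WordSpace R) :
    mulC R n i (mulB R n i (mulA R i m)) =
      -mulB R n (i + 1) (mulA R (i + 1) (mulC R n (i + 1) m)) :=
  LinearMap.congr_fun (mulC_mul_mulB_mul_mulA R n i) m

theorem mulC_succ_wordMulC (i : ℕ) (u : List Letter) :
    mulC R n (i + 1) (wordMulC R n i u) = 0 := by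
  refine wordMulC_induction R n (P := fun i _ m => mulC R n (i + 1) m = 0) ?_ ?_ ?_ i u
  · intro i v ih
    rw [map_neg, mulC_mulB_mulA, ih, map_zero, map_zero, neg_zero, neg_zero]
  · intro i _
    exact map_zero _
  · intro i u
    rw [mulC_single, wordMulC_succ_c]

theorem mulC_succ_mul_mulC (i : ℕ) : mulC R n (i + 1) * mulC R n i = 0 :=
  Finsupp.basisSingleOne.ext fun u => by simp [mulC_succ_wordMulC]

open MulOpposite in
theorem relations_op_mulLetter : Relations n fun l => op (mulLetter R n l) where
  b_eq_zero i hi := by simp only [mulLetter, mulB_eq_zero R n hi, op_zero]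
  ca_eq_zero := by simp only [mulLetter, ← op_mul, mulA_zero_mul_mulC_zero, op_zero]
  abc_eq i := by simp only [mulLetter, ← op_mul, mulC_mul_mulB_mul_mulA, op_neg]
  bca_eq_zero i := by simp only [mulLetter, ← op_mul, mulA_mul_mulC_mul_mulB, op_zero]
  cc_eq_zero i := by simp only [mulLetter, ← op_mul, mulC_succ_mul_mulC, op_zero]
  ba_eq_zero i := by simp only [mulLetter, ← op_mul, mulA_mul_mulB_succ, op_zero]

variable {R n}

theorem mulA_apply_cons {i : ℕ} {u : List Letter} (hu : ¬KilledByA i u) (m : WordSpace R) :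
    mulA R i m (.a i :: u) = m u := by
  classical
  suffices Finsupp.lapply (.a i :: u) ∘ₗ mulA R i = Finsupp.lapply u from LinearMap.congr_fun this m
  refine Finsupp.basisSingleOne.ext fun t => ?_
  by_cases ht : KilledByA i t
  · have htu : t ≠ u := fun h => hu (h ▸ ht)
    simp [wordMulA_of_killed ht, htu]
  · simp [wordMulA_of_not_killed ht, Finsupp.single_apply]

theorem killedByA_of_mulA_eq_zero {i : ℕ} {m : WordSpace R} (hm : mulA R i m = 0)
    {u : List Letter} (hu : u ∈ m.support) : KilledByA i u := by
  by_contra hk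
  rw [Finsupp.mem_support_iff, ← mulA_apply_cons hk, hm] at hu
  exact hu rfl

theorem mulB_apply_cons {i : ℕ} (hi : i ≤ n) (u : List Letter) (m : WordSpace R) :
    mulB R n i m (.b i :: u) = m u := by
  classical
  suffices Finsupp.lapply (.b i :: u) ∘ₗ mulB R n i = Finsupp.lapply u from
    LinearMap.congr_fun this m
  exact Finsupp.basisSingleOne.ext fun t => by simp [wordMulB_of_le hi, Finsupp.single_apply]

theorem mulB_injective {i : ℕ} (hi : i ≤ n) : Function.Injective (mulB R n i) := by
  intro m m' h
  ext u
  rw [← mulB_apply_cons hi, h, mulB_apply_cons hi]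

theorem mulB_apply_c_cons (i j : ℕ) (u : List Letter) (m : WordSpace R) :
    mulB R n i m (.c j :: u) = 0 := by
  suffices Finsupp.lapply (.c j :: u) ∘ₗ mulB R n i = 0 from LinearMap.congr_fun this m
  refine Finsupp.basisSingleOne.ext fun t => ?_
  by_cases hi : i ≤ n <;> simp [wordMulB, hi]

theorem wordMulC_apply_c_cons_of_ne {i : ℕ} {t u : List Letter} (htu : t ≠ u) :
    wordMulC R n i t (.c i :: u) = 0 := by
  refine wordMulC_induction R n (P := fun i t m => t ≠ u → m (.c i :: u) = 0) ?_ ?_ ?_ i t htu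
  · intro i v _ _
    rw [Finsupp.neg_apply, mulB_apply_c_cons, neg_zero]
  · intro i v _
    rfl
  · intro i t htu
    simp [htu]

theorem mulC_apply_cons {i : ℕ} {u : List Letter}
    (hu : wordMulC R n i u = single (.c i :: u) 1) (m : WordSpace R) :
    mulC R n i m (.c i :: u) = m u := by
  suffices Finsupp.lapply (.c i :: u) ∘ₗ mulC R n i = Finsupp.lapply u from
    LinearMap.congr_fun this m
  refine Finsupp.basisSingleOne.ext fun t => ?_
  obtain rfl | htu := eq_or_ne t u
  · simp [hu]
  · simp [wordMulC_apply_c_cons_of_ne htu, htu]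

/-- The linear map `v ↦ v aᵢ bᵢ` on words; unlike `mulB R n i * mulA R i` it never rewrites. -/
noncomputable def appendAB (R : Type*) [CommRing R] (i : ℕ) : Module.End R (WordSpace R) :=
  Finsupp.lmapDomain R R fun v => .b i :: .a i :: v

@[simp]
theorem appendAB_single (i : ℕ) (v : List Letter) (r : R) :
    appendAB R i (single v r) = single (.b i :: .a i :: v) r := by
  simp [appendAB]

theorem exists_appendAB_eq {i : ℕ} {m : WordSpace R}
    (hm : ∀ u ∈ m.support, ∃ v, u = .b i :: .a i :: v) : ∃ q, appendAB R i q = m := by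
  have hinj : Function.Injective fun v => Letter.b i :: .a i :: v := fun v v' h => by simpa using h
  exact ⟨m.comapDomain _ hinj.injOn, Finsupp.mapDomain_comapDomain _ hinj m fun u hu =>
    (hm u hu).imp fun _ => Eq.symm⟩

theorem mulC_appendAB (i : ℕ) (q : WordSpace R) :
    mulC R n i (appendAB R i q) = -mulB R n (i + 1) (mulA R (i + 1) (mulC R n (i + 1) q)) := by
  suffices mulC R n i ∘ₗ appendAB R i =
      -(mulB R n (i + 1) ∘ₗ mulA R (i + 1) ∘ₗ mulC R n (i + 1)) from
    LinearMap.congr_fun this q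
  exact Finsupp.basisSingleOne.ext fun u => by simp

theorem wordMulC_zero_eq_single {u : List Letter} (hu : ∀ v, u ≠ .b 0 :: .a 0 :: v) :
    wordMulC R n 0 u = single (.c 0 :: u) 1 := by
  refine wordMulC_induction R n (P := fun i t m => i = 0 → (∀ v, t ≠ .b i :: .a i :: v) →
    m = single (.c i :: t) 1) ?_ ?_ ?_ 0 u rfl hu
  · intro i v _ _ hne
    exact absurd rfl (hne v)
  · intro i v hi
    exact absurd hi i.succ_ne_zero
  · intro i u _ _
    rfl

theorem exists_of_mulC_zero_add_mulB_one_eq_zero (hn : 1 ≤ n) {m p : WordSpace R}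
    (h : mulC R n 0 m + mulB R n 1 p = 0) :
    ∃ q, m = appendAB R 0 q ∧ p = mulA R 1 (mulC R n 1 q) := by
  have hsupp : ∀ u ∈ m.support, ∃ v, u = .b 0 :: .a 0 :: v := by
    intro u hu
    by_contra! hne
    have hcoeff := DFunLike.congr_fun h (.c 0 :: u)
    rw [Finsupp.add_apply, mulC_apply_cons (wordMulC_zero_eq_single hne), mulB_apply_c_cons,
      add_zero] at hcoeff
    exact Finsupp.mem_support_iff.mp hu hcoeff
  obtain ⟨q, rfl⟩ := exists_appendAB_eq hsupp
  rw [mulC_appendAB, neg_add_eq_zero] at h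
  exact ⟨q, rfl, (mulB_injective hn h).symm⟩

end Words

/-! ### Evaluation of words -/

section Evaluation

variable (R : Type*) [CommRing R] {S : Type*} [Ring S] [Algebra R S] {n : ℕ} (x : Letter → S)

/-- The product spelled by a word under `x`; the head of the list is the rightmost factor. -/
def wordEval : List Letter → S
  | [] => 1
  | l :: u => wordEval u * x l

/-- The linear extension of `wordEval` to the span of words. -/
noncomputable def eval : WordSpace R →ₗ[R] S :=
  Finsupp.linearCombination R (wordEval x)

@[simp]
theorem eval_single (u : List Letter) : eval R x (single u 1) = wordEval x u := by
  simp [eval]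

theorem eval_appendAB (i : ℕ) (q : WordSpace R) :
    eval R x (appendAB R i q) = eval R x q * (x (.a i) * x (.b i)) := by
  suffices eval R x ∘ₗ appendAB R i = LinearMap.mulRight R (x (.a i) * x (.b i)) ∘ₗ eval R x from
    LinearMap.congr_fun this q
  exact Finsupp.basisSingleOne.ext fun u => by simp [wordEval, mul_assoc]

variable {R x}

theorem wordEval_mul_a_of_killed (h : Relations n x) {i : ℕ} {u : List Letter}
    (hu : KilledByA i u) : wordEval x u * x (.a i) = 0 := by
  cases hu with
  | ca => rw [wordEval, mul_assoc, h.ca_eq_zero, mul_zero]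
  | bca => rw [wordEval, wordEval, mul_assoc, mul_assoc, ← mul_assoc (x _), h.bca_eq_zero, mul_zero]
  | ba => rw [wordEval, mul_assoc, h.ba_eq_zero, mul_zero]

theorem eval_mulA (h : Relations n x) (i : ℕ) (m : WordSpace R) :
    eval R x (mulA R i m) = eval R x m * x (.a i) := by
  suffices eval R x ∘ₗ mulA R i = LinearMap.mulRight R (x (.a i)) ∘ₗ eval R x from
    LinearMap.congr_fun this m
  refine Finsupp.basisSingleOne.ext fun u => ?_
  by_cases hu : KilledByA i u
  · simp [wordMulA_of_killed hu, wordEval_mul_a_of_killed h hu]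
  · simp [wordMulA_of_not_killed hu, wordEval]

theorem eval_mulB (h : Relations n x) (i : ℕ) (m : WordSpace R) :
    eval R x (mulB R n i m) = eval R x m * x (.b i) := by
  suffices eval R x ∘ₗ mulB R n i = LinearMap.mulRight R (x (.b i)) ∘ₗ eval R x from
    LinearMap.congr_fun this m
  refine Finsupp.basisSingleOne.ext fun u => ?_
  by_cases hi : i ≤ n
  · simp [wordMulB_of_le hi, wordEval]
  · simp [wordMulB, hi, h.b_eq_zero i (not_le.mp hi)]

theorem eval_wordMulC (h : Relations n x) (i : ℕ) (u : List Letter) :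
    eval R x (wordMulC R n i u) = wordEval x u * x (.c i) := by
  refine wordMulC_induction R n (P := fun i u m => eval R x m = wordEval x u * x (.c i))
    ?_ ?_ ?_ i u
  · intro i v ih
    calc eval R x (-mulB R n (i + 1) (mulA R (i + 1) (wordMulC R n (i + 1) v)))
      _ = wordEval x v * -(x (.c (i + 1)) * x (.a (i + 1)) * x (.b (i + 1))) := by
        rw [map_neg, eval_mulB h, eval_mulA h, ih, mul_neg, mul_assoc, mul_assoc, mul_assoc]
      _ = wordEval x (.b i :: .a i :: v) * x (.c i) := by
        rw [← h.abc_eq, wordEval, wordEval, mul_assoc, mul_assoc, mul_assoc]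
  · intro i v
    rw [map_zero, wordEval, mul_assoc, h.cc_eq_zero, mul_zero]
  · intro i u
    rw [eval_single, wordEval]

theorem eval_mulC (h : Relations n x) (i : ℕ) (m : WordSpace R) :
    eval R x (mulC R n i m) = eval R x m * x (.c i) := by
  suffices eval R x ∘ₗ mulC R n i = LinearMap.mulRight R (x (.c i)) ∘ₗ eval R x from
    LinearMap.congr_fun this m
  exact Finsupp.basisSingleOne.ext fun u => by simp [eval_wordMulC h]

theorem eval_mulLetter (h : Relations n x) (l : Letter) (m : WordSpace R) :
    eval R x (mulLetter R n l m) = eval R x m * x l := by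
  cases l with
  | a i => exact eval_mulA h i m
  | b i => exact eval_mulB h i m
  | c i => exact eval_mulC h i m

theorem exists_eval_eq_of_mulA_zero_eq_zero {m : WordSpace R} (hm : mulA R 0 m = 0) :
    ∃ w y : S, eval R x m = w * x (.c 0) + y * x (.b 1) := by
  suffices eval R x m ∈ Ideal.span {x (.c 0), x (.b 1)} by
    obtain ⟨w, y, h⟩ := Ideal.mem_span_pair.mp this
    exact ⟨w, y, h.symm⟩
  rw [eval, Finsupp.linearCombination_apply]
  refine Submodule.sum_mem _ fun u hu => Submodule.smul_of_tower_mem _ (m u) ?_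
  cases killedByA_of_mulA_eq_zero hm hu with
  | ca | bca | ba => exact Ideal.mul_mem_left _ _ (Ideal.subset_span (by simp))

end Evaluation

/-! ### The algebra `B` inside the span of words -/

section Algebra

variable (K : Type) [Field K] (n : ℕ)

/-- The image of a letter in `B`. -/
noncomputable def letterB : Letter → B K n
  | .a i => aB K n i
  | .b i => bB K n i
  | .c i => cB K n i

variable {K n} in
theorem πB_eq_zero_of_mem_rels {f : FA K n} (hf : f ∈ rels K n) : πB K n f = 0 := by
  simpa only [πB, map_zero] using RingQuot.mkAlgHom_rel K (s := BRel K n) ⟨hf, rfl⟩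

theorem letterB_b_eq_zero (i : ℕ) (hi : n < i) : letterB K n (.b i) = 0 := by
  simp [letterB, bB, gb, hi.not_ge]

theorem letterB_c_eq_zero (i : ℕ) (hi : n < i) : letterB K n (.c i) = 0 := by
  simp [letterB, cB, gc, hi.not_ge]

theorem letterB_ca : letterB K n (.c 0) * letterB K n (.a 0) = 0 := by
  simpa only [map_mul, letterB, aB, cB, Nat.cast_zero] using
    πB_eq_zero_of_mem_rels (K := K) (n := n) (.inr (.inl rfl))

theorem relations_letterB : Relations n (letterB K n) where
  b_eq_zero := letterB_b_eq_zero K n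
  ca_eq_zero := letterB_ca K n
  abc_eq i := by
    rcases lt_trichotomy i n with hi | rfl | hi
    · rw [eq_neg_iff_add_eq_zero]
      simpa only [map_add, map_mul, letterB, aB, bB, cB, Nat.cast_succ] using
        πB_eq_zero_of_mem_rels (.inr (.inr ⟨i, hi, .inl rfl⟩))
    · rw [letterB_b_eq_zero K i (i + 1) i.lt_succ_self, mul_zero, neg_zero]
      simpa only [map_mul, letterB, aB, bB, cB] using
        πB_eq_zero_of_mem_rels (K := K) (n := i) (.inl rfl)
    · rw [letterB_b_eq_zero K n i hi, letterB_b_eq_zero K n (i + 1) (Nat.lt_succ_of_lt hi),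
        mul_zero, zero_mul, mul_zero, neg_zero]
  bca_eq_zero
    | 0 => by rw [mul_assoc, letterB_ca, mul_zero]
    | i + 1 => by
      by_cases hi : i < n
      · simpa only [map_mul, letterB, aB, bB, cB, Nat.cast_succ] using
          πB_eq_zero_of_mem_rels (.inr (.inr ⟨i, hi, .inr (.inl rfl)⟩))
      · rw [letterB_b_eq_zero K n (i + 1) (by omega), zero_mul, zero_mul]
  cc_eq_zero i := by
    by_cases hi : i < n
    · simpa only [map_mul, letterB, cB, Nat.cast_succ] using
        πB_eq_zero_of_mem_rels (.inr (.inr ⟨i, hi, .inr (.inr (.inl rfl))⟩))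
    · rw [letterB_c_eq_zero K n (i + 1) (by omega), mul_zero]
  ba_eq_zero i := by
    by_cases hi : i < n
    · simpa only [map_mul, letterB, aB, bB, Nat.cast_succ] using
        πB_eq_zero_of_mem_rels (.inr (.inr ⟨i, hi, .inr (.inr (.inr rfl))⟩))
    · rw [letterB_b_eq_zero K n (i + 1) (by omega), zero_mul]

/-- The inclusion of the generators of `B` into the letters of unbounded index. -/
def genLetter {n : ℕ} : Gen n → Letter
  | .a i => .a i
  | .b i => .b i
  | .c i => .c i

/-- A generator of the free algebra, indexed by letters; `0` if the index exceeds `n`. -/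
noncomputable def letterFA : Letter → FA K n
  | .a i => ga K n i
  | .b i => gb K n i
  | .c i => gc K n i

theorem πB_letterFA (l : Letter) : πB K n (letterFA K n l) = letterB K n l := by
  cases l <;> rfl

theorem letterFA_genLetter (g : Gen n) : letterFA K n (genLetter g) = FreeAlgebra.ι K g := by
  cases g with
  | a i | b i | c i => simp [genLetter, letterFA, ga, gb, gc, Nat.le_of_lt_succ i.isLt]

section Lift

variable {S : Type*} [Ring S] [Algebra K S] (x : Letter → S)

/-- The algebra map out of the free algebra sending each generator to its value under `x`. -/
noncomputable def liftFA : FA K n →ₐ[K] S := FreeAlgebra.lift K (x ∘ genLetter)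

variable {n} in
theorem liftFA_letterFA {l : Letter} (hl : l.index ≤ n) : liftFA K n x (letterFA K n l) = x l := by
  cases l <;> simp_all [Letter.index, liftFA, letterFA, ga, gb, gc, genLetter]

variable {K n x}

theorem liftFA_eq_zero_of_mem_rels (h : Relations n x) {f : FA K n} (hf : f ∈ rels K n) :
    liftFA K n x f = 0 := by
  have ha {i : ℕ} (hi : i ≤ n) : liftFA K n x (ga K n i) = x (.a i) :=
    liftFA_letterFA K x (l := .a i) hi
  have hb {i : ℕ} (hi : i ≤ n) : liftFA K n x (gb K n i) = x (.b i) :=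
    liftFA_letterFA K x (l := .b i) hi
  have hc {i : ℕ} (hi : i ≤ n) : liftFA K n x (gc K n i) = x (.c i) :=
    liftFA_letterFA K x (l := .c i) hi
  obtain rfl | rfl | ⟨i, hi, hf⟩ := hf
  · rw [map_mul, map_mul, ha le_rfl, hb le_rfl, hc le_rfl, h.abc_eq,
      h.b_eq_zero _ n.lt_succ_self, mul_zero, neg_zero]
  · rw [map_mul, ← Nat.cast_zero, hc n.zero_le, ha n.zero_le, h.ca_eq_zero]
  · have hi' : i + 1 ≤ n := hi
    rw [← Nat.cast_succ] at hf
    obtain rfl | rfl | rfl | rfl := hf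
    · simp only [map_add, map_mul, ha hi.le, hb hi.le, hc hi.le, ha hi', hb hi', hc hi', h.abc_eq,
        neg_add_cancel]
    · simp only [map_mul, ha hi', hb hi', hc hi', h.bca_eq_zero]
    · simp only [map_mul, hc hi.le, hc hi', h.cc_eq_zero]
    · simp only [map_mul, ha hi.le, hb hi', h.ba_eq_zero]

/-- The universal property of `B`: elements satisfying its relations define an algebra map. -/
noncomputable def Relations.lift (h : Relations n x) : B K n →ₐ[K] S :=
  RingQuot.liftAlgHom K ⟨liftFA K n x, fun f g ⟨hf, hg⟩ => by
    rw [hg, map_zero, liftFA_eq_zero_of_mem_rels h hf]⟩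

theorem Relations.lift_πB (h : Relations n x) (f : FA K n) :
    h.lift (πB K n f) = liftFA K n x f := by
  simp [Relations.lift, πB]

theorem Relations.lift_letterB (h : Relations n x) {l : Letter} (hl : l.index ≤ n) :
    h.lift (letterB K n l) = x l := by
  rw [← πB_letterFA, h.lift_πB, liftFA_letterFA K x hl]

end Lift

/-- The right action of `B` on the span of words. -/
noncomputable def action : B K n →ₐ[K] (Module.End K (WordSpace K))ᵐᵒᵖ :=
  (relations_op_mulLetter K n).lift

variable {K n}

theorem eval_action (z : B K n) (m : WordSpace K) :
    eval K (letterB K n) ((action K n z).unop m) = eval K (letterB K n) m * z := by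
  obtain ⟨f, rfl⟩ : ∃ f, πB K n f = z := RingQuot.mkAlgHom_surjective K _ z
  rw [action, Relations.lift_πB]
  induction f using FreeAlgebra.induction generalizing m with
  | grade0 r => simp [Algebra.algebraMap_eq_smul_one]
  | grade1 g =>
    rw [← letterFA_genLetter, πB_letterFA, ← eval_mulLetter (relations_letterB K n),
      liftFA_letterFA]
    · rfl
    · cases g with
      | a i | b i | c i => exact Nat.le_of_lt_succ i.isLt
  | mul f g hf hg => simp [hf, hg, mul_assoc]
  | add f g hf hg => simp [hf, hg, mul_add]

variable (K n) in
/-- The action of `B` on the empty word. It expresses an element of `B` as a combination of words;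
see `eval_coords`. -/
noncomputable def coords : B K n →ₗ[K] WordSpace K where
  toFun z := (action K n z).unop (single [] 1)
  map_add' := by simp
  map_smul' := by simp

theorem eval_coords (z : B K n) : eval K (letterB K n) (coords K n z) = z :=
  (eval_action z _).trans (by simp [wordEval])

theorem coords_mul_letterB (z : B K n) {l : Letter} (hl : l.index ≤ n) :
    coords K n (z * letterB K n l) = mulLetter K n l (coords K n z) := by
  simp [coords, action, Relations.lift_letterB _ hl]

theorem mul_a_eq_zero_of_mul_ab_eq_zero {i : ℕ} (hi : i ≤ n) {z : B K n}
    (h : z * (letterB K n (.a i) * letterB K n (.b i)) = 0) : z * letterB K n (.a i) = 0 := by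
  rw [← mul_assoc] at h
  have hcoords : mulB K n i (coords K n (z * letterB K n (.a i))) = mulB K n i 0 := by
    rw [map_zero, ← map_zero (coords K n), ← h]
    exact (coords_mul_letterB _ (l := .b i) hi).symm
  rw [← eval_coords (z * _), mulB_injective hi hcoords, map_zero]

theorem exists_of_mul_a_zero_eq_zero {z : B K n} (h : z * letterB K n (.a 0) = 0) :
    ∃ w x, z = w * letterB K n (.c 0) + x * letterB K n (.b 1) := by
  have hcoords : mulA K 0 (coords K n z) = 0 := by
    rw [← map_zero (coords K n), ← h]
    exact (coords_mul_letterB z (l := .a 0) n.zero_le).symm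
  rw [← eval_coords z]
  exact exists_eval_eq_of_mulA_zero_eq_zero hcoords

theorem exists_of_mul_c_zero_add_mul_b_one_eq_zero (hn : 1 ≤ n) {w x : B K n}
    (h : w * letterB K n (.c 0) + x * letterB K n (.b 1) = 0) :
    ∃ z, w = z * (letterB K n (.a 0) * letterB K n (.b 0)) ∧
      x = z * (letterB K n (.c 1) * letterB K n (.a 1)) := by
  have hcoords : mulC K n 0 (coords K n w) + mulB K n 1 (coords K n x) = 0 := by
    rw [← map_zero (coords K n), ← h, map_add, coords_mul_letterB w (l := .c 0) n.zero_le,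
      coords_mul_letterB x (l := .b 1) hn]
    rfl
  obtain ⟨q, hw, hx⟩ := exists_of_mulC_zero_add_mulB_one_eq_zero hn hcoords
  have hrel := relations_letterB K n
  refine ⟨eval K (letterB K n) q, ?_, ?_⟩
  · rw [← eval_coords w, hw, eval_appendAB]
  · rw [← eval_coords x, hx, eval_mulA hrel, eval_mulC hrel, mul_assoc]

end Algebra

end Resolution

/-- Lemma 3.4, for `n ≥ 1`. The 2-periodic complex
`⋯ → B → B² → B → B² → B → B a_0 → 0`, with differentials alternating between
`z ↦ (z a_0 b_0, z c_1 a_1)` and `(w, x) ↦ w c_0 + x b_1`, and augmentation `z ↦ z a_0`,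
is exact, i.e. it is a free resolution of `B a_0`. -/
theorem stmt_11 (K : Type) [Field K] (n : ℕ) (hn : 1 ≤ n) :
    -- the augmentation `z ↦ z a_0` maps onto the left ideal `B a_0`
    (∀ y, y ∈ Ideal.span {aB K n 0} ↔ ∃ z : B K n, y = z * aB K n 0) ∧
    -- exactness at the augmentation spot: ker(z ↦ z a_0) = im((w,x) ↦ w c_0 + x b_1)
    (∀ z : B K n, z * aB K n 0 = 0 ↔ ∃ w x : B K n, z = w * cB K n 0 + x * bB K n 1) ∧
    -- exactness at the `B²` spots
    (∀ w x : B K n,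
      (w * cB K n 0 + x * bB K n 1 = 0) ↔
      (∃ z : B K n, w = z * (aB K n 0 * bB K n 0) ∧ x = z * (cB K n 1 * aB K n 1))) ∧
    -- exactness at the `B` spots
    (∀ z : B K n,
      (z * (aB K n 0 * bB K n 0) = 0 ∧ z * (cB K n 1 * aB K n 1) = 0) ↔
      (∃ w x : B K n, z = w * cB K n 0 + x * bB K n 1)) := by
  have hrel := Resolution.relations_letterB K n
  have hker {z : B K n} : z * aB K n 0 = 0 → ∃ w x, z = w * cB K n 0 + x * bB K n 1 :=
    Resolution.exists_of_mul_a_zero_eq_zero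
  have hca (w x : B K n) : (w * cB K n 0 + x * bB K n 1) * aB K n 0 = 0 :=
    hrel.mul_c_add_mul_b_mul_a w x
  refine ⟨fun y => ?_, fun z => ⟨hker, ?_⟩, fun w x => ⟨?_, ?_⟩, fun z => ⟨?_, ?_⟩⟩
  · simp only [Ideal.mem_span_singleton', eq_comm]
  · rintro ⟨w, x, rfl⟩
    exact hca w x
  · exact Resolution.exists_of_mul_c_zero_add_mul_b_one_eq_zero hn
  · rintro ⟨z, rfl, rfl⟩
    exact hrel.mul_ab_mul_c_add_mul_ca_mul_b 0 z
  · rintro ⟨hz, -⟩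
    exact hker (Resolution.mul_a_eq_zero_of_mul_ab_eq_zero n.zero_le hz)
  · rintro ⟨w, x, rfl⟩
    exact ⟨by rw [← mul_assoc, hca, zero_mul], hrel.mul_c_add_mul_b_mul_ca 0 w x⟩
end
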